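/- arXiv:1710.06093 — 12 statements merged into one kernel-verified Lean document; each statement's English description precedes it below -/
import Mathlib

section
/- The following two conditions on A are equivalent: (1) for every choice (j_1, …, j_k) with 1 ≤ j_i ≤ n_i, every principal minor of the k × k matrix A_{j_1⋯j_k} = (a_{p, j_q}^q)_{1 ≤ p, q ≤ k} equals 1, i.e. for every subset S ⊆ {1, …, k} the determinant of the submatrix of A_{j_1⋯j_k} with rows and columns indexed by S equals 1; (2) for every choice (ℓ_1, …, ℓ_k) with 0 ≤ ℓ_i ≤ n_i, the following n vectors form a basis of 𝔽₂ⁿ (whose coordinates are indexed by the pairs (i, m) with 1 ≤ i ≤ k, 1 ≤ m ≤ n_i): the standard basis vectors e_{(i,m)} for all 1 ≤ i ≤ k and 1 ≤ m ≤ n_i with m ≠ ℓ_i, together with, for each i with ℓ_i ≥ 1, the i-th row a_i = (a_{i,1}^1, …, a_{i,n_1}^1, …, a_{i,1}^k, …, a_{i,n_k}^k) of A. -/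
/-- The determinant of the big matrix equals the principal minor. -/
theorem aux_det (k : ℕ) (n : Fin k → ℕ)
    (a : Fin k → (i : Fin k) → Fin (n i) → ZMod 2)
    (j : (q : Fin k) → Fin (n q)) (S : Finset (Fin k)) (ℓ : (i : Fin k) → Fin (n i + 1))
    (h1 : ∀ i ∈ S, ℓ i = (j i).succ) (h0 : ∀ i, i ∉ S → ℓ i = 0) :
    (Matrix.of (fun x : Σ i : Fin k, Fin (n i) =>
            if x.2.succ = ℓ x.1 then (fun y : Σ i : Fin k, Fin (n i) => a x.1 y.1 y.2)
            else Pi.single x (1 : ZMod 2))).det =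
    (Matrix.of (fun p q : {x // x ∈ S} => a p.1 q.1 (j q.1))).det := by
  classical
  rw [Matrix.twoBlockTriangular_det _ (fun x : Σ i : Fin k, Fin (n i) => x.2.succ = ℓ x.1)]
  · have hone : (Matrix.toSquareBlockProp (Matrix.of (fun x : Σ i : Fin k, Fin (n i) =>
            if x.2.succ = ℓ x.1 then (fun y : Σ i : Fin k, Fin (n i) => a x.1 y.1 y.2)
            else Pi.single x (1 : ZMod 2)))
            (fun x : Σ i : Fin k, Fin (n i) => ¬ x.2.succ = ℓ x.1)) = 1 := by
      ext x y
      simp only [Matrix.toSquareBlockProp_def, Matrix.of_apply, if_neg x.2, Pi.single_apply,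
        Matrix.one_apply, Subtype.ext_iff]
      simp only [eq_comm]
    rw [hone, Matrix.det_one, mul_one]
    let f : {x // x ∈ S} → {x : Σ i : Fin k, Fin (n i) // x.2.succ = ℓ x.1} :=
      fun i => ⟨⟨i.1, j i.1⟩, (h1 i.1 i.2).symm⟩
    have hf : Function.Bijective f := by
      constructor
      · intro p q hpq
        have := congrArg (fun z => z.1.1) hpq
        exact Subtype.ext this
      · rintro ⟨⟨i, m⟩, hx⟩
        have hx' : m.succ = ℓ i := hx
        have hi : i ∈ S := by
          by_contra hi
          rw [h0 i hi] at hx'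
          exact Fin.succ_ne_zero _ hx'
        have hm : m = j i := by
          rw [h1 i hi] at hx'
          exact Fin.succ_injective _ hx'
        refine ⟨⟨i, hi⟩, ?_⟩
        subst hm
        rfl
    rw [← Matrix.det_submatrix_equiv_self (Equiv.ofBijective f hf)]
    congr 1
    ext p q
    simp only [Matrix.submatrix_apply, Equiv.ofBijective_apply, Matrix.toSquareBlockProp_def,
      Matrix.of_apply]
    rw [if_pos (f p).2]
  · intro x hx y hy
    have hxy : y ≠ x := by
      rintro rfl
      exact hx hy
    simp only [Matrix.of_apply, if_neg hx, Pi.single_apply, if_neg hxy]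

theorem aux_basis {ι : Type} [Fintype ι] [DecidableEq ι] (v : ι → ι → ZMod 2) :
    (LinearIndependent (ZMod 2) v ∧ Submodule.span (ZMod 2) (Set.range v) = ⊤) ↔
      (Matrix.of v).det = 1 := by
  have hu : ∀ x : ZMod 2, x = 1 ↔ IsUnit x := by decide
  rw [hu, ← Matrix.isUnit_iff_isUnit_det, ← Matrix.linearIndependent_rows_iff_isUnit]
  constructor
  · exact fun h => h.1
  · intro h
    exact ⟨h, h.span_eq_top_of_card_eq_finrank' (by simp)⟩

/-- Fix `k ≥ 1`, block sizes `n i ≥ 1`, and a `k × n` matrix over `𝔽₂` with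
entries `a j i m` (`= a_{j, m}^{i}` in the paper, with `m` 0-indexed within the `i`-th block).
The following are equivalent:
(1) for every choice `j` of one column index in each block, every principal minor of the `k × k`
matrix `(p, q) ↦ a p q (j q)` equals `1`;
(2) for every choice `ℓ` with `ℓ i ∈ {0, …, n i}`, the family of vectors in `𝔽₂ⁿ` (coordinates
indexed by pairs `(i, m)`) consisting of the standard basis vectors `e_{(i,m)}` for `m + 1 ≠ ℓ i`
together with, for each `i` with `ℓ i ≥ 1`, the `i`-th row of the matrix (in place of
`e_{(i, ℓ i - 1)}`), is a basis of `𝔽₂ⁿ`. -/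
theorem stmt_0 (k : ℕ) (hk : 1 ≤ k) (n : Fin k → ℕ) (hn : ∀ i, 1 ≤ n i)
    (a : Fin k → (i : Fin k) → Fin (n i) → ZMod 2) :
    (∀ j : (q : Fin k) → Fin (n q), ∀ S : Finset (Fin k),
        (Matrix.of (fun p q : {x // x ∈ S} => a p.1 q.1 (j q.1))).det = 1) ↔
    (∀ ℓ : (i : Fin k) → Fin (n i + 1),
        LinearIndependent (ZMod 2)
          (fun x : Σ i : Fin k, Fin (n i) =>
            if x.2.succ = ℓ x.1 then (fun y : Σ i : Fin k, Fin (n i) => a x.1 y.1 y.2)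
            else Pi.single x (1 : ZMod 2)) ∧
        Submodule.span (ZMod 2)
          (Set.range (fun x : Σ i : Fin k, Fin (n i) =>
            if x.2.succ = ℓ x.1 then (fun y : Σ i : Fin k, Fin (n i) => a x.1 y.1 y.2)
            else Pi.single x (1 : ZMod 2))) = ⊤) := by
  constructor
  · intro h ℓ
    rw [aux_basis]
    have hj : ∀ i, ∃ m : Fin (n i), ℓ i ≠ 0 → ℓ i = m.succ := by
      intro i
      by_cases hi : ℓ i = 0
      · exact ⟨⟨0, hn i⟩, fun h => absurd hi h⟩
      · obtain ⟨m, hm⟩ := Fin.exists_succ_eq.2 hi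
        exact ⟨m, fun _ => hm.symm⟩
    choose j hj using hj
    rw [aux_det k n a j (Finset.univ.filter fun i => ℓ i ≠ 0) ℓ
      (fun i hi => hj i (by simpa using hi)) (fun i hi => by simpa using hi)]
    exact h j _
  · intro h j S
    have := (aux_basis _).1 (h (fun i => if i ∈ S then (j i).succ else 0))
    rw [← this]
    exact (aux_det k n a j S (fun i => if i ∈ S then (j i).succ else 0)
      (fun i hi => if_pos hi) (fun i hi => if_neg hi)).symm
end

section
/- Suppose that for every choice (j_1, …, j_k) with 1 ≤ j_i ≤ n_i, every principal minor of the k × k matrix A_{j_1⋯j_k} = (a_{p, j_q}^q)_{1 ≤ p, q ≤ k} equals 1. Then there exists a permutation σ of {1, …, k} such that the matrix B with entries b_{p,m}^q = a_{σ(p), m}^{σ(q)} (for 1 ≤ p, q ≤ k and 1 ≤ m ≤ n_{σ(q)}) is in unipotent upper triangular form, i.e. b_{p,m}^q = 0 whenever p > q, and b_{p,m}^p = 1 for all 1 ≤ p ≤ k and 1 ≤ m ≤ n_{σ(p)}. -/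
/-- Every nonempty set has a vertex whose block has no off-diagonal nonzero entry in that set. -/
theorem exists_source (k : ℕ) (n : Fin k → ℕ) (hn : ∀ i, 1 ≤ n i)
    (a : Fin k → (i : Fin k) → Fin (n i) → ZMod 2)
    (hminor : ∀ j : (q : Fin k) → Fin (n q), ∀ S : Finset (Fin k),
      (Matrix.of (fun p q : {x // x ∈ S} => a p.1 q.1 (j q.1))).det = 1)
    (hdiag : ∀ p m, a p p m = 1) (S : Finset (Fin k)) :
    S.Nonempty → ∃ q ∈ S, ∀ r ∈ S, r ≠ q → ∀ m, a r q m = 0 := by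
  induction S using Finset.strongInduction with
  | H S ih =>
  intro hS
  by_contra! hcon
  have key : ∀ f : Fin k → Fin k, (∀ q ∈ S, f q ∈ S ∧ f q ≠ q ∧ ∃ m, a (f q) q m ≠ 0) →
      S.image f = S := by
    intro f hf
    by_contra hne
    have hsub : S.image f ⊆ S := by
      intro x hx
      obtain ⟨q, hq, rfl⟩ := Finset.mem_image.1 hx
      exact (hf q hq).1
    obtain ⟨q, hq, h⟩ := ih _ (hsub.ssubset_of_ne hne) (hS.image f)
    obtain ⟨h1, h2, m, hm⟩ := hf q (hsub hq)
    exact hm (h (f q) (Finset.mem_image_of_mem f (hsub hq)) h2 m)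
  have hex : ∀ q, ∃ r, ∃ m, q ∈ S → r ∈ S ∧ r ≠ q ∧ a r q m ≠ 0 := by
    intro q
    by_cases hq : q ∈ S
    · obtain ⟨r, h1, h2, m, h3⟩ := hcon q hq
      exact ⟨r, m, fun _ => ⟨h1, h2, h3⟩⟩
    · exact ⟨q, ⟨0, hn q⟩, fun h => absurd h hq⟩
  choose f j hf using hex
  have himg := key f (fun q hq => ⟨(hf q hq).1, (hf q hq).2.1, j q, (hf q hq).2.2⟩)
  have hinj : Set.InjOn f S := Finset.card_image_iff.1 (by rw [himg])
  have hchord : ∀ q ∈ S, ∀ r ∈ S, r ≠ q → r ≠ f q → a r q (j q) = 0 := by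
    intro q hq r hr hrq hrf
    by_contra hne
    have h2 := key (Function.update f q r) (by
      intro x hx
      by_cases hxq : x = q
      · subst hxq
        simp only [Function.update_self]
        exact ⟨hr, hrq, j x, hne⟩
      · rw [Function.update_of_ne hxq]
        exact ⟨(hf x hx).1, (hf x hx).2.1, j x, (hf x hx).2.2⟩)
    have h3 : f q ∈ S.image (Function.update f q r) := by rw [h2]; exact (hf q hq).1
    obtain ⟨x, hx, hxe⟩ := Finset.mem_image.1 h3
    by_cases hxq : x = q
    · subst hxq
      simp only [Function.update_self] at hxe
      exact hrf hxe
    · rw [Function.update_of_ne hxq] at hxe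
      exact hxq (hinj hx hq hxe)
  have hz : ∀ x : ZMod 2, x ≠ 0 → x = 1 := by decide
  have hdet := hminor j S
  have h0 : (Matrix.of (fun p q : {x // x ∈ S} => a p.1 q.1 (j q.1))).det = 0 := by
    apply Matrix.exists_vecMul_eq_zero_iff.1
    obtain ⟨s, hs⟩ := hS
    refine ⟨fun _ => 1, fun h => one_ne_zero (congrFun h ⟨s, hs⟩), ?_⟩
    ext ⟨q, hq⟩
    simp only [Matrix.vecMul, dotProduct, Matrix.of_apply, one_mul, Pi.zero_apply]
    rw [Finset.sum_coe_sort S (fun p => a p q (j q))]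
    obtain ⟨h1, h2, h3⟩ := hf q hq
    have hsub : ({q, f q} : Finset (Fin k)) ⊆ S := by
      intro x hx
      simp only [Finset.mem_insert, Finset.mem_singleton] at hx
      rcases hx with rfl | rfl <;> assumption
    rw [← Finset.sum_subset hsub, Finset.sum_pair h2.symm, hdiag, hz _ h3]
    · decide
    · intro x hx hx2
      simp only [Finset.mem_insert, Finset.mem_singleton, not_or] at hx2
      exact hchord q hq x hx hx2.1 hx2.2
  rw [h0] at hdet
  exact zero_ne_one hdet

/-- A family with sources can be sorted. -/
theorem exists_sorted (k : ℕ) (R : Fin k → Fin k → Prop)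
    (hR : ∀ S : Finset (Fin k), S.Nonempty → ∃ q ∈ S, ∀ r ∈ S, r ≠ q → R q r)
    (S : Finset (Fin k)) :
    ∃ l : List (Fin k), l.Nodup ∧ (∀ x, x ∈ l ↔ x ∈ S) ∧ l.Pairwise R := by
  induction S using Finset.strongInduction with
  | H S ih =>
  rcases S.eq_empty_or_nonempty with rfl | hS
  · exact ⟨[], by simp⟩
  obtain ⟨q, hq, h⟩ := hR S hS
  obtain ⟨l, h1, h2, h3⟩ := ih _ (Finset.erase_ssubset hq)
  refine ⟨q :: l, ?_, ?_, ?_⟩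
  · rw [List.nodup_cons, h2]
    exact ⟨by simp, h1⟩
  · intro x
    rw [List.mem_cons, h2, Finset.mem_erase]
    by_cases hx : x = q
    · subst hx; simp [hq]
    · simp [hx]
  · rw [List.pairwise_cons]
    refine ⟨fun x hx => ?_, h3⟩
    rw [h2, Finset.mem_erase] at hx
    exact h x hx.2 hx.1


/-- If every principal minor of every matrix `A_{j_1 ⋯ j_k}` (obtained by
choosing one column `j q` from each block `q`) equals `1`, then there is a permutation `σ` of
`{1, …, k}` such that the simultaneously row- and block-permuted matrix
`b p q m = a (σ p) (σ q) m` is unipotent upper triangular: `b p q m = 0` for `p > q`, and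
`b p p m = 1` for all `p` and all `m`. -/
theorem stmt_1 (k : ℕ) (hk : 1 ≤ k) (n : Fin k → ℕ) (hn : ∀ i, 1 ≤ n i)
    (a : Fin k → (i : Fin k) → Fin (n i) → ZMod 2)
    (hminor : ∀ j : (q : Fin k) → Fin (n q), ∀ S : Finset (Fin k),
      (Matrix.of (fun p q : {x // x ∈ S} => a p.1 q.1 (j q.1))).det = 1) :
    ∃ σ : Equiv.Perm (Fin k),
      (∀ p q : Fin k, q < p → ∀ m : Fin (n (σ q)), a (σ p) (σ q) m = 0) ∧
      (∀ p : Fin k, ∀ m : Fin (n (σ p)), a (σ p) (σ p) m = 1) := by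
  have hdiag : ∀ p m, a p p m = 1 := by
    intro p m
    have h := hminor (Function.update (fun q => ⟨0, hn q⟩) p m) {p}
    haveI : Unique {x // x ∈ ({p} : Finset (Fin k))} :=
      ⟨⟨⟨p, by simp⟩⟩, fun x => Subtype.ext (Finset.mem_singleton.1 x.2)⟩
    rw [Matrix.det_unique] at h
    have hd : ((default : {x // x ∈ ({p} : Finset (Fin k))}) : Fin k) = p :=
      Finset.mem_singleton.1 (default : {x // x ∈ ({p} : Finset (Fin k))}).2
    rw [Matrix.of_apply, hd, Function.update_self] at h
    exact h
  obtain ⟨l, h1, h2, h3⟩ := exists_sorted k (fun q r => ∀ m, a r q m = 0)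
    (exists_source k n hn a hminor hdiag) Finset.univ
  have hlen : l.length = k := by
    rw [← List.toFinset_card_of_nodup h1, show l.toFinset = Finset.univ by ext x; simp [h2]]
    simp
  let e := List.Nodup.getEquivOfForallMemList l h1 (fun x => (h2 x).2 (Finset.mem_univ x))
  refine ⟨(finCongr hlen.symm).trans e, ?_, fun p m => hdiag _ m⟩
  intro p q hpq
  exact List.pairwise_iff_get.1 h3 (finCongr hlen.symm q) (finCongr hlen.symm p) hpq
end

section
/- Suppose A is in unipotent upper triangular form. Then the formula (g_1, …, g_k) · ((x_0^1, …, x_{n_1}^1), …, (x_0^k, …, x_{n_k}^k)) = ((g_1 x_0^1, (∏_{j=1}^k g_j^{a_{j,1}^1}) x_1^1, …, (∏_{j=1}^k g_j^{a_{j,n_1}^1}) x_{n_1}^1), …, (g_k x_0^k, (∏_{j=1}^k g_j^{a_{j,1}^k}) x_1^k, …, (∏_{j=1}^k g_j^{a_{j,n_k}^k}) x_{n_k}^k)), where the exponents a_{j,m}^i ∈ 𝔽₂ are read as integers 0 or 1, defines an action of the group {±1}^k on the product of unit spheres S^{n_1} × ⋯ × S^{n_k} (with S^{n_i} ⊆ ℝ^{n_i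 + 1}), and this action is free. -/
/-- The formula from the paper: `(g_1, …, g_k)` acts on the product `∏ i, ℝ^{n_i + 1}` by
multiplying the coordinate `x_0^i` by `g_i` and the coordinate `x_m^i` (`1 ≤ m ≤ n_i`) by
`∏_j g_j ^ (a_{j,m}^i)`, the exponents in `𝔽₂` being read as integers `0` or `1`.
Here the group `{±1}^k` is realized as `Fin k → ℤˣ`. -/
def bottAct (k : ℕ) (n : Fin k → ℕ) (a : Fin k → (i : Fin k) → Fin (n i) → ZMod 2)
    (g : Fin k → ℤˣ) (x : (i : Fin k) → Fin (n i + 1) → ℝ) :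
    (i : Fin k) → Fin (n i + 1) → ℝ :=
  fun i => Fin.cases (((g i : ℤ) : ℝ) * x i 0)
    (fun m : Fin (n i) =>
      (∏ j : Fin k, ((g j : ℤ) : ℝ) ^ (a j i m).val) * x i m.succ)

/-- If `A` is in unipotent upper triangular form, then the formula `bottAct`
defines an action of the group `{±1}^k ≃ (Fin k → ℤˣ)` on the product of unit spheres
`S^{n_1} × ⋯ × S^{n_k} ⊆ ∏ i, ℝ^{n_i + 1}` (it satisfies the two action axioms and maps the
product of spheres into itself), and this action is free. -/
theorem stmt_2 (k : ℕ) (hk : 1 ≤ k) (n : Fin k → ℕ) (hn : ∀ i, 1 ≤ n i)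
    (a : Fin k → (i : Fin k) → Fin (n i) → ZMod 2)
    (hUT : ∀ j i : Fin k, i < j → ∀ m : Fin (n i), a j i m = 0)
    (hdiag : ∀ i : Fin k, ∀ m : Fin (n i), a i i m = 1) :
    (∀ x : (i : Fin k) → Fin (n i + 1) → ℝ, bottAct k n a 1 x = x) ∧
    (∀ g h : Fin k → ℤˣ, ∀ x : (i : Fin k) → Fin (n i + 1) → ℝ,
      bottAct k n a (g * h) x = bottAct k n a g (bottAct k n a h x)) ∧
    (∀ g : Fin k → ℤˣ, ∀ x : (i : Fin k) → Fin (n i + 1) → ℝ,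
      (∀ i : Fin k, ∑ m : Fin (n i + 1), (x i m) ^ 2 = 1) →
      (∀ i : Fin k, ∑ m : Fin (n i + 1), (bottAct k n a g x i m) ^ 2 = 1)) ∧
    (∀ g : Fin k → ℤˣ, ∀ x : (i : Fin k) → Fin (n i + 1) → ℝ,
      (∀ i : Fin k, ∑ m : Fin (n i + 1), (x i m) ^ 2 = 1) →
      bottAct k n a g x = x → g = 1) := by
  have sqz : ∀ u : ℤˣ, (((u : ℤ) : ℝ)) ^ 2 = 1 := by
    intro u
    rcases Int.units_eq_one_or u with h | h <;> simp [h]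
  refine ⟨?_, ?_, ?_, ?_⟩
  · intro x
    funext i m
    refine Fin.cases ?_ (fun m => ?_) m <;> simp [bottAct]
  · intro g h x
    funext i m
    refine Fin.cases ?_ (fun m => ?_) m
    · simp [bottAct, mul_assoc]
    · simp [bottAct, mul_pow, Finset.prod_mul_distrib, mul_assoc]
  · intro g x hx i
    rw [← hx i]
    refine Finset.sum_congr rfl (fun m _ => ?_)
    refine Fin.cases ?_ (fun m => ?_) m
    · simp [bottAct, mul_pow, sqz]
    · simp only [bottAct, Fin.cases_succ, mul_pow, ← Finset.prod_pow]
      rw [Finset.prod_eq_one, one_mul]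
      intro j _
      rw [← pow_mul, mul_comm, pow_mul, sqz, one_pow]
  · intro g x hx hfix
    have key : ∀ N : ℕ, ∀ i : Fin k, i.val = N → g i = 1 := by
      intro N
      induction N using Nat.strong_induction_on with
      | _ N ih =>
        intro i hi
        have hfac : ∀ m, ((g i : ℤ) : ℝ) * x i m = x i m := by
          intro m
          have h1 := congrFun (congrFun hfix i) m
          revert h1
          refine Fin.cases ?_ (fun m => ?_) m
          · intro h1
            simpa [bottAct] using h1
          · intro h1
            simp only [bottAct, Fin.cases_succ] at h1
            rw [Finset.prod_eq_single i] at h1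
            · rw [hdiag] at h1
              simpa [ZMod.val_one] using h1
            · intro j _ hj
              rcases lt_or_gt_of_ne hj with hlt | hgt
              · rw [ih j.val (by omega) j rfl]
                simp
              · rw [hUT j i hgt m]
                simp
            · simp
        rcases Int.units_eq_one_or (g i) with h | h
        · exact h
        · exfalso
          have hz : ∀ m, x i m = 0 := by
            intro m
            have := hfac m
            rw [h] at this
            push_cast at this
            linarith
          have := hx i
          simp [hz] at this
    funext i
    exact key _ i rfl
end

section
/- The group Γ is abelian if and only if a_{p,1}^q = 0 for all pairs 1 ≤ p < q ≤ k with q > l. -/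
/-- The set of relators of the group `Γ` (on generators `α_0, …, α_{k-1}`, 0-indexed) from the
presentation of the fundamental group of a generalized real Bott manifold.  Here `l` plays the
role of the number of blocks of size at least two, and `a p q` is the entry `a_{p,1}^q`.
(Indices are 0-based: the paper's generator `α_j` corresponds to index `j - 1`.) -/
def gbmRels (k l : ℕ) (a : Fin k → Fin k → ZMod 2) : Set (FreeGroup (Fin k)) :=
  {r | (∃ p : Fin k, (p : ℕ) < l ∧ r = (FreeGroup.of p) ^ 2) ∨
       (∃ p q : Fin k, p < q ∧ (q : ℕ) < l ∧ r = (FreeGroup.of p * FreeGroup.of q) ^ 2) ∨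
       (∃ p q : Fin k, p < q ∧ l ≤ (p : ℕ) ∧
         r = (if a p q = 0 then
                FreeGroup.of p * FreeGroup.of q * (FreeGroup.of p)⁻¹ * (FreeGroup.of q)⁻¹
              else
                FreeGroup.of p * (FreeGroup.of q)⁻¹ * (FreeGroup.of p)⁻¹ * (FreeGroup.of q)⁻¹)) ∨
       (∃ p q : Fin k, p < q ∧ (p : ℕ) < l ∧ l ≤ (q : ℕ) ∧
         r = (if a p q = 0 then
                FreeGroup.of p * FreeGroup.of q * FreeGroup.of p * (FreeGroup.of q)⁻¹
              else
                (FreeGroup.of p * FreeGroup.of q) ^ 2))}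

/-- Images of the generators in the dihedral group of order 6. -/
def gbmImg {k : ℕ} (a : Fin k → Fin k → ZMod 2) (q0 p : Fin k) : DihedralGroup 3 :=
  if p = q0 then DihedralGroup.r 1
  else if p < q0 ∧ a p q0 ≠ 0 then DihedralGroup.sr 0 else 1

theorem gbmImg_self {k : ℕ} (a : Fin k → Fin k → ZMod 2) (q0 : Fin k) :
    gbmImg a q0 q0 = DihedralGroup.r 1 := by simp [gbmImg]

theorem gbmImg_ne {k : ℕ} (a : Fin k → Fin k → ZMod 2) (q0 p : Fin k) (h : p ≠ q0) :
    gbmImg a q0 p = DihedralGroup.sr 0 ∨ gbmImg a q0 p = 1 := by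
  unfold gbmImg
  rw [if_neg h]
  split_ifs <;> simp

theorem gbmImg_gt {k : ℕ} (a : Fin k → Fin k → ZMod 2) (q0 p : Fin k) (h : q0 < p) :
    gbmImg a q0 p = 1 := by
  unfold gbmImg
  rw [if_neg h.ne', if_neg (fun h' => absurd h'.1 (not_lt.mpr h.le))]

theorem gbmImg_lt {k : ℕ} (a : Fin k → Fin k → ZMod 2) (q0 p : Fin k) (h : p < q0) :
    gbmImg a q0 p = if a p q0 = 0 then 1 else DihedralGroup.sr 0 := by
  unfold gbmImg
  rw [if_neg h.ne]
  by_cases h0 : a p q0 = 0 <;> simp [h, h0]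

theorem gbmImg_rels {k l : ℕ} (a : Fin k → Fin k → ZMod 2) (q0 : Fin k) (hq : l ≤ (q0 : ℕ)) :
    ∀ r ∈ gbmRels k l a, FreeGroup.lift (gbmImg a q0) r = 1 := by
  rintro r (⟨p, hp, rfl⟩ | ⟨p, q, hpq, hql, rfl⟩ | ⟨p, q, hpq, hp, rfl⟩ | ⟨p, q, hpq, hp, hql, rfl⟩)
  · have hne : p ≠ q0 := by rintro rfl; omega
    simp only [map_pow, FreeGroup.lift_apply_of]
    rcases gbmImg_ne a q0 p hne with h | h <;> rw [h] <;> decide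
  · have hne : q ≠ q0 := by rintro rfl; omega
    have hne' : p ≠ q0 := by rintro rfl; have : (p : ℕ) < q := hpq; omega
    simp only [map_pow, map_mul, FreeGroup.lift_apply_of]
    rcases gbmImg_ne a q0 p hne' with h | h <;> rcases gbmImg_ne a q0 q hne with h' | h' <;>
      rw [h, h'] <;> decide
  · rw [apply_ite (FreeGroup.lift (gbmImg a q0))]
    simp only [map_mul, map_inv, FreeGroup.lift_apply_of]
    rcases lt_trichotomy q q0 with h | rfl | h
    · rcases gbmImg_ne a q0 p (hpq.trans h).ne with h1 | h1 <;>
        rcases gbmImg_ne a q0 q h.ne with h2 | h2 <;>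
        rw [h1, h2] <;> split_ifs <;> decide
    · rw [gbmImg_self, gbmImg_lt a q p hpq]
      split_ifs <;> decide
    · rw [gbmImg_gt a q0 q h]
      simp
  · rw [apply_ite (FreeGroup.lift (gbmImg a q0))]
    have hne' : p ≠ q0 := by rintro rfl; omega
    simp only [map_mul, map_inv, map_pow, FreeGroup.lift_apply_of]
    rcases lt_trichotomy q q0 with h | rfl | h
    · rcases gbmImg_ne a q0 p hne' with h1 | h1 <;>
        rcases gbmImg_ne a q0 q h.ne with h2 | h2 <;>
        rw [h1, h2] <;> split_ifs <;> decide
    · rw [gbmImg_self, gbmImg_lt a q p hpq]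
      split_ifs <;> decide
    · rw [gbmImg_gt a q0 q h]
      rcases gbmImg_ne a q0 p hne' with h1 | h1 <;> rw [h1] <;> split_ifs <;> decide

theorem gbm_comm_lt {k l : ℕ} (a : Fin k → Fin k → ZMod 2)
    (H : ∀ p q : Fin k, p < q → l ≤ (q : ℕ) → a p q = 0) (p q : Fin k) (hpq : p < q) :
    (PresentedGroup.of p : PresentedGroup (gbmRels k l a)) * PresentedGroup.of q
      = PresentedGroup.of q * PresentedGroup.of p := by
  have key : ∀ r ∈ gbmRels k l a, PresentedGroup.mk (gbmRels k l a) r = 1 :=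
    fun r hr => PresentedGroup.one_of_mem hr
  have sq : ∀ p : Fin k, (p : ℕ) < l →
      (PresentedGroup.of p : PresentedGroup (gbmRels k l a)) ^ 2 = 1 := by
    intro p hp
    exact key _ (Or.inl ⟨p, hp, rfl⟩)
  rcases lt_or_ge (q : ℕ) l with hq | hq
  · have hp : (p : ℕ) < l := lt_trans hpq hq
    have h1 := sq p hp
    have h2 := sq q hq
    have h3 : ((PresentedGroup.of p : PresentedGroup (gbmRels k l a)) *
      PresentedGroup.of q) ^ 2 = 1 := key _ (Or.inr (Or.inl ⟨p, q, hpq, hq, rfl⟩))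
    rw [pow_two] at h1 h2 h3
    have e1 := eq_inv_of_mul_eq_one_left h1
    have e2 := eq_inv_of_mul_eq_one_left h2
    have e3 := eq_inv_of_mul_eq_one_left h3
    rw [mul_inv_rev, ← e1, ← e2] at e3
    exact e3
  · have h0 := H p q hpq hq
    rcases lt_or_ge (p : ℕ) l with hp | hp
    · have h1 := sq p hp
      have h3 : (PresentedGroup.of p : PresentedGroup (gbmRels k l a)) *
        PresentedGroup.of q * PresentedGroup.of p * (PresentedGroup.of q)⁻¹ = 1 :=
        key _ (Or.inr (Or.inr (Or.inr ⟨p, q, hpq, hp, hq, by rw [if_pos h0]⟩)))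
      rw [pow_two] at h1
      have e1 := eq_inv_of_mul_eq_one_left h1
      have e3 := mul_inv_eq_one.mp h3
      have e4 := eq_mul_inv_of_mul_eq e3
      rwa [← e1] at e4
    · have h3 : (PresentedGroup.of p : PresentedGroup (gbmRels k l a)) *
        PresentedGroup.of q * (PresentedGroup.of p)⁻¹ * (PresentedGroup.of q)⁻¹ = 1 :=
        key _ (Or.inr (Or.inr (Or.inl ⟨p, q, hpq, hp, by rw [if_pos h0]⟩)))
      exact mul_inv_eq_iff_eq_mul.mp (mul_inv_eq_one.mp h3)

/-- The group `Γ` is abelian if and only if `a_{p,1}^q = 0` for all pairs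
`1 ≤ p < q ≤ k` with `q > l`. -/
theorem stmt_6 (k l : ℕ) (hk : 1 ≤ k) (hl : l ≤ k) (a : Fin k → Fin k → ZMod 2) :
    (∀ x y : PresentedGroup (gbmRels k l a), x * y = y * x) ↔
      (∀ p q : Fin k, p < q → l ≤ (q : ℕ) → a p q = 0) := by
  constructor
  · intro H p q hpq hq
    by_contra h0
    have h := congrArg (PresentedGroup.toGroup (gbmImg_rels (l := l) a q hq))
      (H (PresentedGroup.of p) (PresentedGroup.of q))
    rw [map_mul, map_mul, PresentedGroup.toGroup.of, PresentedGroup.toGroup.of, gbmImg_self,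
      gbmImg_lt a q p hpq, if_neg h0] at h
    revert h
    decide
  · intro H
    have hgen : ∀ p q : Fin k,
        (PresentedGroup.of p : PresentedGroup (gbmRels k l a)) * PresentedGroup.of q
          = PresentedGroup.of q * PresentedGroup.of p := by
      intro p q
      rcases lt_trichotomy p q with h | rfl | h
      · exact gbm_comm_lt a H p q h
      · rfl
      · exact (gbm_comm_lt a H q p h).symm
    intro x y
    have hx : x ∈ Subgroup.closure (Set.range (PresentedGroup.of (rels := gbmRels k l a))) := by
      rw [PresentedGroup.closure_range_of]; trivial
    have hy : y ∈ Subgroup.closure (Set.range (PresentedGroup.of (rels := gbmRels k l a))) := by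
      rw [PresentedGroup.closure_range_of]; trivial
    have hc : ∀ g ∈ Set.range (PresentedGroup.of (rels := gbmRels k l a)),
        ∀ h ∈ Set.range (PresentedGroup.of (rels := gbmRels k l a)), g * h = h * g := by
      rintro _ ⟨p, rfl⟩ _ ⟨q, rfl⟩
      exact hgen p q
    have := (Subgroup.isMulCommutative_closure hc).is_comm.comm ⟨x, hx⟩ ⟨y, hy⟩
    exact congrArg Subtype.val this
end

section
/- The commutator subgroup [Γ, Γ] is abelian. In particular Γ is a solvable group. -/
theorem gbm_sq_conj {G : Type*} [Group G] (u v : G)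
    (h : u * v * u⁻¹ = v ∨ u * v * u⁻¹ = v⁻¹) :
    (u * v ^ 2 * u⁻¹ = v ^ 2 ∨ u * v ^ 2 * u⁻¹ = (v ^ 2)⁻¹) ∧
    (u⁻¹ * v ^ 2 * u = v ^ 2 ∨ u⁻¹ * v ^ 2 * u = (v ^ 2)⁻¹) ∧ Commute (u ^ 2) v := by
  have e : u * v ^ 2 * u⁻¹ = (u * v * u⁻¹) ^ 2 := by rw [conj_pow]
  have c2 : u ^ 2 * v * (u ^ 2)⁻¹ = u * (u * v * u⁻¹) * u⁻¹ := by
    simp only [pow_two, mul_inv_rev, mul_assoc]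
  rcases h with h | h
  · rw [h] at e
    refine ⟨Or.inl e, Or.inl ?_, ?_⟩
    · rw [mul_assoc, inv_mul_eq_iff_eq_mul, ← mul_inv_eq_iff_eq_mul.mp e]
    · rw [h, h] at c2
      exact mul_inv_eq_iff_eq_mul.mp c2
  · rw [h] at e
    have e2 : u * v ^ 2 * u⁻¹ = (v ^ 2)⁻¹ := by rw [e, inv_pow]
    refine ⟨Or.inr e2, Or.inr ?_, ?_⟩
    · have e3 : (u * v ^ 2 * u⁻¹)⁻¹ = v ^ 2 := by rw [e2, inv_inv]
      calc u⁻¹ * v ^ 2 * u = u⁻¹ * (u * v ^ 2 * u⁻¹)⁻¹ * u := by rw [e3]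
        _ = (v ^ 2)⁻¹ := by group
    · rw [h] at c2
      have c3 : u * v⁻¹ * u⁻¹ = (u * v * u⁻¹)⁻¹ := by group
      rw [c3, h, inv_inv] at c2
      exact mul_inv_eq_iff_eq_mul.mp c2

theorem gbm_aux {G ι : Type*} [Group G] [LinearOrder ι] (x : ι → G)
    (hx : Subgroup.closure (Set.range x) = ⊤)
    (h : ∀ p q, p < q → x p * x q * (x p)⁻¹ = x q ∨ x p * x q * (x p)⁻¹ = (x q)⁻¹) :
    ∀ u ∈ commutator G, ∀ v ∈ commutator G, u * v = v * u := by
  set N := Subgroup.closure (Set.range fun i => x i ^ 2) with hN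
  have hs : ∀ i, x i ^ 2 ∈ N := fun i => Subgroup.subset_closure ⟨i, rfl⟩
  have key : ∀ p q, p < q → _ := fun p q hpq => gbm_sq_conj _ _ (h p q hpq)
  have comm : ∀ p q, Commute (x p ^ 2) (x q ^ 2) := by
    intro p q
    rcases lt_trichotomy p q with hpq | rfl | hpq
    · exact (key p q hpq).2.2.pow_right 2
    · exact Commute.refl _
    · exact ((key q p hpq).2.2.pow_right 2).symm
  have Ncomm : ∀ u ∈ N, ∀ v ∈ N, u * v = v * u := by
    intro u hu v hv
    refine Subgroup.closure_induction₂ (p := fun a b _ _ => Commute a b)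
      ?_ ?_ ?_ ?_ ?_ ?_ ?_ hu hv
    · rintro _ _ ⟨p, rfl⟩ ⟨q, rfl⟩; exact comm p q
    · intros; exact Commute.one_left _
    · intros; exact Commute.one_right _
    · intro _ _ _ _ _ _ h1 h2; exact h1.mul_left h2
    · intro _ _ _ _ _ _ h1 h2; exact h1.mul_right h2
    · intro _ _ _ _ h1; exact h1.inv_left
    · intro _ _ _ _ h1; exact h1.inv_right
  have lift : ∀ g : G, (∀ q, g * x q ^ 2 * g⁻¹ ∈ N) → ∀ n ∈ N, g * n * g⁻¹ ∈ N := by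
    intro g hg n hn
    have : N ≤ N.comap (MulAut.conj g).toMonoidHom := by
      conv_lhs => rw [hN]
      rw [Subgroup.closure_le]
      rintro _ ⟨q, rfl⟩
      exact hg q
    exact this hn
  have gen : ∀ p q, x p * x q ^ 2 * (x p)⁻¹ ∈ N ∧ (x p)⁻¹ * x q ^ 2 * x p ∈ N := by
    intro p q
    rcases lt_trichotomy p q with hpq | rfl | hpq
    · obtain ⟨h1, h2, -⟩ := key p q hpq
      constructor
      · rcases h1 with h1 | h1 <;> rw [h1]
        · exact hs q
        · exact inv_mem (hs q)
      · rcases h2 with h1 | h1 <;> rw [h1]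
        · exact hs q
        · exact inv_mem (hs q)
    · have c : Commute (x p) (x p ^ 2) := Commute.self_pow _ _
      constructor
      · rw [c.eq, mul_inv_cancel_right]; exact hs p
      · rw [mul_assoc, ← c.eq, inv_mul_cancel_left]; exact hs p
    · have c := (key q p hpq).2.2.symm
      constructor
      · rw [c.eq, mul_inv_cancel_right]; exact hs q
      · rw [mul_assoc, ← c.eq, inv_mul_cancel_left]; exact hs q
  have nrm : ∀ g : G, ∀ n ∈ N, g * n * g⁻¹ ∈ N := by
    intro g
    have hg : g ∈ Subgroup.closure (Set.range x) := hx ▸ Subgroup.mem_top g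
    have : (∀ n ∈ N, g * n * g⁻¹ ∈ N) ∧ (∀ n ∈ N, g⁻¹ * n * g⁻¹⁻¹ ∈ N) := by
      induction hg using Subgroup.closure_induction with
      | mem y hy =>
        obtain ⟨p, rfl⟩ := hy
        refine ⟨lift _ fun q => (gen p q).1, lift _ fun q => ?_⟩
        rw [inv_inv]; exact (gen p q).2
      | one => simp
      | mul y z _ _ h1 h2 =>
        constructor
        · intro n hn
          have := h1.1 _ (h2.1 n hn)
          convert this using 1; group
        · intro n hn
          have := h2.2 _ (h1.2 n hn)
          convert this using 1; group
      | inv y _ h1 => exact ⟨h1.2, by simpa using h1.1⟩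
    exact this.1
  have : N.Normal := ⟨fun n hn g => nrm g n hn⟩
  have qgen : ∀ p q, p < q → Commute (QuotientGroup.mk (s := N) (x p)) (QuotientGroup.mk (x q)) := by
    intro p q hpq
    have hq : (QuotientGroup.mk (s := N) (x q))⁻¹ = QuotientGroup.mk (x q) := by
      rw [← QuotientGroup.mk_inv, QuotientGroup.eq, inv_inv, ← pow_two]; exact hs q
    have : QuotientGroup.mk (s := N) (x p) * QuotientGroup.mk (x q) * (QuotientGroup.mk (x p))⁻¹
        = QuotientGroup.mk (x q) := by
      rw [← QuotientGroup.mk_inv, ← QuotientGroup.mk_mul, ← QuotientGroup.mk_mul]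
      rcases h p q hpq with h1 | h1 <;> rw [h1]
      rw [QuotientGroup.mk_inv, hq]
    exact mul_inv_eq_iff_eq_mul.mp this
  have qcomm : ∀ u v : G, Commute (QuotientGroup.mk (s := N) u) (QuotientGroup.mk v) := by
    intro u v
    have hu : u ∈ Subgroup.closure (Set.range x) := hx ▸ Subgroup.mem_top u
    have hv : v ∈ Subgroup.closure (Set.range x) := hx ▸ Subgroup.mem_top v
    refine Subgroup.closure_induction₂
      (p := fun a b _ _ => Commute (QuotientGroup.mk (s := N) a) (QuotientGroup.mk b))
      ?_ ?_ ?_ ?_ ?_ ?_ ?_ hu hv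
    · rintro _ _ ⟨p, rfl⟩ ⟨q, rfl⟩
      rcases lt_trichotomy p q with hpq | rfl | hpq
      · exact qgen p q hpq
      · exact Commute.refl _
      · exact (qgen q p hpq).symm
    · intros; exact Commute.one_left _
    · intros; exact Commute.one_right _
    · intro _ _ _ _ _ _ h1 h2; exact h1.mul_left h2
    · intro _ _ _ _ _ _ h1 h2; exact h1.mul_right h2
    · intro _ _ _ _ h1; exact h1.inv_left
    · intro _ _ _ _ h1; exact h1.inv_right
  have hle : commutator G ≤ N := by
    rw [commutator_def, Subgroup.commutator_le]
    intro u _ v _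
    rw [← QuotientGroup.eq_one_iff]
    have := qcomm u v
    rw [← commutatorElement_eq_one_iff_commute] at this
    exact this
  exact fun u hu v hv => Ncomm u (hle hu) v (hle hv)

/-- The commutator subgroup `[Γ, Γ]` is abelian; in particular `Γ` is solvable. -/
theorem stmt_7 (k l : ℕ) (hk : 1 ≤ k) (hl : l ≤ k) (a : Fin k → Fin k → ZMod 2) :
    (∀ x ∈ commutator (PresentedGroup (gbmRels k l a)),
      ∀ y ∈ commutator (PresentedGroup (gbmRels k l a)), x * y = y * x) ∧
    IsSolvable (PresentedGroup (gbmRels k l a)) := by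
  have main : ∀ x ∈ commutator (PresentedGroup (gbmRels k l a)),
      ∀ y ∈ commutator (PresentedGroup (gbmRels k l a)), x * y = y * x := by
    apply gbm_aux (fun i => PresentedGroup.of (rels := gbmRels k l a) i)
    · exact PresentedGroup.closure_range_of _
    intro p q hpq
    have rel : ∀ r ∈ gbmRels k l a, PresentedGroup.mk (gbmRels k l a) r = 1 :=
      fun r hr => PresentedGroup.one_of_mem hr
    have ofdef : ∀ i, PresentedGroup.mk (gbmRels k l a) (FreeGroup.of i)
      = PresentedGroup.of i := fun i => rfl
    have sq : ∀ i : Fin k, (i : ℕ) < l →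
        (PresentedGroup.of (rels := gbmRels k l a) i)⁻¹ = PresentedGroup.of i := by
      intro i hi
      have := rel _ (Or.inl ⟨i, hi, rfl⟩)
      rw [map_pow, ofdef, pow_two] at this
      exact inv_eq_of_mul_eq_one_left this
    have e2 : ∀ {G : Type} [Group G] (u v : G), u⁻¹ = u → (u * v) ^ 2 = 1 →
        u * v * u⁻¹ = v⁻¹ := by
      intro G _ u v hu h
      rw [hu]
      rw [pow_two, ← mul_assoc] at h
      exact eq_inv_of_mul_eq_one_left h
    by_cases hp : (p : ℕ) < l
    · by_cases hq : (q : ℕ) < l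
      · have := rel _ (Or.inr (Or.inl ⟨p, q, hpq, hq, rfl⟩))
        rw [map_pow, map_mul, ofdef, ofdef] at this
        exact Or.inr (e2 _ _ (sq p hp) this)
      · have := rel _ (Or.inr (Or.inr (Or.inr ⟨p, q, hpq, hp, not_lt.mp hq, rfl⟩)))
        split_ifs at this
        · simp only [map_mul, map_inv, ofdef] at this
          left
          simp only [sq p hp]
          exact mul_inv_eq_one.mp this
        · rw [map_pow, map_mul, ofdef, ofdef] at this
          exact Or.inr (e2 _ _ (sq p hp) this)
    · have := rel _ (Or.inr (Or.inr (Or.inl ⟨p, q, hpq, not_lt.mp hp, rfl⟩)))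
      split_ifs at this
      · simp only [map_mul, map_inv, ofdef] at this
        exact Or.inl (mul_inv_eq_one.mp this)
      · simp only [map_mul, map_inv, ofdef] at this
        right
        have h2 := mul_inv_eq_one.mp this
        have h3 := congrArg (fun z => z⁻¹) h2
        simpa [mul_assoc] using h3
  refine ⟨main, ?_⟩
  refine (Group.isSolvable_def _).mpr ⟨2, ?_⟩
  rw [derivedSeries_succ, derivedSeries_one, eq_bot_iff, Subgroup.commutator_le]
  intro u hu v hv
  rw [Subgroup.mem_bot, commutatorElement_eq_one_iff_mul_comm]
  exact main u hu v hv
end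

section
/- Let r be the number of indices q with l < q ≤ k for which there exists some p < q with a_{p,1}^q = 1. Then the abelianization Γ/[Γ, Γ] is isomorphic to ℤ^{k − l − r} × (ℤ/2ℤ)^{l + r}. -/
/-- Indices of generators that become 2-torsion in the abelianization. -/
def gbmT (k l : ℕ) (a : Fin k → Fin k → ZMod 2) (q : Fin k) : Prop :=
  (q : ℕ) < l ∨ (l ≤ (q : ℕ) ∧ ∃ p : Fin k, p < q ∧ a p q = 1)

theorem gbm_zmod2 (x : ZMod 2) (h : x ≠ 0) : x = 1 := by
  revert x; decide

theorem gbm_c1 {G : Type*} [CommGroup G] (x y : G) : x * y⁻¹ * x⁻¹ * y⁻¹ = y⁻¹ * y⁻¹ := by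
  rw [mul_right_comm x, mul_inv_cancel, one_mul]

theorem gbm_c2 {G : Type*} [CommGroup G] (x y : G) : x * y * x * y⁻¹ = x * x := by
  rw [mul_right_comm x y x, mul_inv_cancel_right]

open Classical in
/-- Images of the generators. -/
noncomputable def gbmGen {k : ℕ} (T : Fin k → Prop) (i : Fin k) :
    ({i // ¬ T i} → ℤ) × ({i // T i} → ZMod 2) :=
  if h : T i then (0, Pi.single ⟨i, h⟩ 1) else (Pi.single ⟨i, h⟩ 1, 0)

theorem gbmGen_two {k : ℕ} (T : Fin k → Prop) (i : Fin k) (h : T i) :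
    gbmGen T i + gbmGen T i = 0 := by
  classical
  have h2 : (1 : ZMod 2) + 1 = 0 := by decide
  simp only [gbmGen, h, dif_pos, Prod.mk_add_mk, ← Pi.single_add, h2, Pi.single_zero, add_zero]
  rfl

/-- The forward map. -/
theorem gbm_fwd (k l : ℕ) (a : Fin k → Fin k → ZMod 2) :
    ∀ r ∈ gbmRels k l a,
      FreeGroup.lift (fun i => Multiplicative.ofAdd (gbmGen (gbmT k l a) i)) r = 1 := by
  have key : ∀ i, gbmT k l a i → Multiplicative.ofAdd (gbmGen (gbmT k l a) i) *
      Multiplicative.ofAdd (gbmGen (gbmT k l a) i) = 1 := fun i h => by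
    rw [← ofAdd_add, gbmGen_two _ _ h]; rfl
  have key2 : ∀ i, gbmT k l a i → (Multiplicative.ofAdd (gbmGen (gbmT k l a) i))⁻¹ =
      Multiplicative.ofAdd (gbmGen (gbmT k l a) i) := fun i h =>
    inv_eq_of_mul_eq_one_left (key i h)
  rintro r (⟨p, hp, rfl⟩ | ⟨p, q, hpq, hq, rfl⟩ | ⟨p, q, hpq, hp, rfl⟩ | ⟨p, q, hpq, hp, hq, rfl⟩)
  · rw [map_pow, FreeGroup.lift_apply_of, pow_two]
    exact key p (Or.inl hp)
  · have h1 := key p (Or.inl (lt_trans hpq hq))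
    have h2 := key q (Or.inl hq)
    simp only [map_pow, map_mul, FreeGroup.lift_apply_of, pow_two]
    rw [mul_mul_mul_comm, h1, h2, one_mul]
  · split_ifs with h
    · simp only [map_mul, map_inv, FreeGroup.lift_apply_of]
      rw [mul_right_comm, mul_inv_cancel_right, mul_inv_cancel]
    · have h2 := key2 q (Or.inr ⟨le_trans hp (le_of_lt hpq), p, hpq, gbm_zmod2 _ h⟩)
      simp only [map_mul, map_inv, FreeGroup.lift_apply_of]
      rw [gbm_c1, h2]
      exact key q (Or.inr ⟨le_trans hp (le_of_lt hpq), p, hpq, gbm_zmod2 _ h⟩)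
  · have h1 := key p (Or.inl hp)
    split_ifs with h
    · simp only [map_mul, map_inv, FreeGroup.lift_apply_of]
      rw [gbm_c2, h1]
    · have h2 := key q (Or.inr ⟨hq, p, hpq, gbm_zmod2 _ h⟩)
      simp only [map_pow, map_mul, FreeGroup.lift_apply_of, pow_two]
      rw [mul_mul_mul_comm, h1, h2, one_mul]

/-- Generators in the abelianization. -/
def gbmX (k l : ℕ) (a : Fin k → Fin k → ZMod 2) (i : Fin k) :
    Abelianization (PresentedGroup (gbmRels k l a)) :=
  Abelianization.of (PresentedGroup.of i)

theorem gbm_rel {k l : ℕ} {a : Fin k → Fin k → ZMod 2} {r : FreeGroup (Fin k)}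
    (hr : r ∈ gbmRels k l a) : FreeGroup.lift (gbmX k l a) r = 1 := by
  have h : FreeGroup.lift (gbmX k l a) =
      (Abelianization.of).comp (PresentedGroup.mk (gbmRels k l a)) := by
    ext i; simp [gbmX, PresentedGroup.of]
  rw [h, MonoidHom.comp_apply, PresentedGroup.one_of_mem hr, map_one]

theorem gbmX_sq (k l : ℕ) (a : Fin k → Fin k → ZMod 2) (i : Fin k) (h : gbmT k l a i) :
    gbmX k l a i * gbmX k l a i = 1 := by
  have low : ∀ p : Fin k, (p : ℕ) < l → gbmX k l a p * gbmX k l a p = 1 := fun p hp => by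
    have := gbm_rel (k := k) (l := l) (a := a) (Or.inl ⟨p, hp, rfl⟩)
    simpa [pow_two] using this
  rcases h with h | ⟨hi, p, hpi, hpa⟩
  · exact low i h
  · have h0 : a p i ≠ 0 := by rw [hpa]; decide
    by_cases hp : (p : ℕ) < l
    · have := gbm_rel (k := k) (l := l) (a := a)
        (Or.inr (Or.inr (Or.inr ⟨p, i, hpi, hp, hi, rfl⟩)))
      rw [if_neg h0] at this
      simp only [map_pow, map_mul, FreeGroup.lift_apply_of, pow_two] at this
      rwa [mul_mul_mul_comm, low p hp, one_mul] at this
    · have := gbm_rel (k := k) (l := l) (a := a)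
        (Or.inr (Or.inr (Or.inl ⟨p, i, hpi, not_lt.mp hp, rfl⟩)))
      rw [if_neg h0] at this
      simp only [map_mul, map_inv, FreeGroup.lift_apply_of] at this
      rw [gbm_c1, ← mul_inv, inv_eq_one] at this
      exact this

/-- A map out of the model group. -/
theorem gbm_bwd {k : ℕ} (T : Fin k → Prop) {A : Type*} [AddCommGroup A] (x : Fin k → A)
    (hx : ∀ i, T i → x i + x i = 0) :
    ∃ ψ : (({i // ¬ T i} → ℤ) × ({i // T i} → ZMod 2)) →+ A, ∀ i, ψ (gbmGen T i) = x i := by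
  classical
  let g : ∀ i : {i // T i}, ZMod 2 →+ A := fun i =>
    ZMod.lift 2 ⟨zmultiplesHom A (x i), by simpa [two_zsmul] using hx i i.2⟩
  have hg : ∀ i, g i 1 = x i := fun i => by
    have := ZMod.lift_coe 2 ⟨zmultiplesHom A (x i), by simpa [two_zsmul] using hx i i.2⟩ 1
    simpa [g] using this
  refine ⟨AddMonoidHom.coprod
    (∑ i : {i // ¬ T i}, (zmultiplesHom A (x i)).comp (Pi.evalAddMonoidHom _ i))
    (∑ i : {i // T i}, (g i).comp (Pi.evalAddMonoidHom _ i)), fun i => ?_⟩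
  by_cases h : T i
  · simp only [gbmGen, h, dif_pos, AddMonoidHom.coprod_apply, map_zero, zero_add,
      AddMonoidHom.finsetSum_apply, AddMonoidHom.comp_apply, Pi.evalAddMonoidHom_apply]
    rw [Finset.sum_eq_single ⟨i, h⟩]
    · simp [hg]
    · intro b _ hb; simp [Pi.single_eq_of_ne hb]
    · simp
  · simp only [gbmGen, h, dif_neg, not_false_eq_true, AddMonoidHom.coprod_apply, map_zero, add_zero,
      AddMonoidHom.finsetSum_apply, AddMonoidHom.comp_apply, Pi.evalAddMonoidHom_apply]
    rw [Finset.sum_eq_single ⟨i, h⟩]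
    · simp
    · intro b _ hb; simp [Pi.single_eq_of_ne hb]
    · simp

/-- Homs out of the model group agree if they agree on generators. -/
theorem gbm_ext {k : ℕ} (T : Fin k → Prop) {A : Type*} [AddCommGroup A]
    (f g : (({i // ¬ T i} → ℤ) × ({i // T i} → ZMod 2)) →+ A)
    (h : ∀ i, f (gbmGen T i) = g (gbmGen T i)) : f = g := by
  classical
  have e1 : f.comp (AddMonoidHom.inl _ _) = g.comp (AddMonoidHom.inl _ _) := by
    apply AddMonoidHom.functions_ext'
    rintro ⟨i, hi⟩
    apply AddMonoidHom.ext_int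
    have := h i
    simp only [gbmGen, hi, dif_neg, not_false_eq_true] at this
    simpa using this
  have e2 : f.comp (AddMonoidHom.inr _ _) = g.comp (AddMonoidHom.inr _ _) := by
    apply AddMonoidHom.functions_ext'
    rintro ⟨i, hi⟩
    have := h i
    simp only [gbmGen, hi, dif_pos] at this
    ext y
    have hy : y = 0 ∨ y = 1 := by revert y; decide
    rcases hy with rfl | rfl
    · rw [map_zero, map_zero]
    · simpa using this
  ext y
  have hy : y = AddMonoidHom.inl _ _ y.1 + AddMonoidHom.inr _ _ y.2 := by simp
  rw [hy, map_add, map_add]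
  exact congrArg₂ _ (DFunLike.congr_fun e1 _) (DFunLike.congr_fun e2 _)

theorem gbm_equiv (k l : ℕ) (a : Fin k → Fin k → ZMod 2) :
    Nonempty (Abelianization (PresentedGroup (gbmRels k l a)) ≃*
      Multiplicative (({i // ¬ gbmT k l a i} → ℤ) × ({i // gbmT k l a i} → ZMod 2))) := by
  let φ := Abelianization.lift (PresentedGroup.toGroup (gbm_fwd k l a))
  have hφ : ∀ i, φ (gbmX k l a i) = Multiplicative.ofAdd (gbmGen (gbmT k l a) i) := fun i => by
    simp [φ, gbmX]
  obtain ⟨ψ, hψ⟩ := gbm_bwd (gbmT k l a)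
    (A := Additive (Abelianization (PresentedGroup (gbmRels k l a))))
    (fun i => Additive.ofMul (gbmX k l a i))
    (fun i hi => by rw [← ofMul_mul, gbmX_sq k l a i hi]; rfl)
  let ψ' := AddMonoidHom.toMultiplicativeLeft ψ
  have hψ' : ∀ i, ψ' (Multiplicative.ofAdd (gbmGen (gbmT k l a) i)) = gbmX k l a i := fun i =>
    congrArg Additive.toMul (hψ i)
  refine ⟨MonoidHom.toMulEquiv φ ψ' ?_ ?_⟩
  · apply Abelianization.hom_ext
    apply PresentedGroup.ext
    intro i
    change ψ' (φ (gbmX k l a i)) = gbmX k l a i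
    rw [hφ, hψ']
  · apply AddMonoidHom.toMultiplicative.symm.injective
    apply gbm_ext
    intro i
    change Multiplicative.toAdd (φ (ψ' (Multiplicative.ofAdd (gbmGen (gbmT k l a) i)))) = gbmGen _ i
    rw [hψ', hφ]; rfl

/-- Let `r` be the number of indices `q` with `l < q ≤ k` such that there exists
`p < q` with `a_{p,1}^q = 1`.  Then the abelianization of `Γ` is isomorphic to
`ℤ^{k−l−r} × (ℤ/2ℤ)^{l+r}`. -/
theorem stmt_8 (k l : ℕ) (hk : 1 ≤ k) (hl : l ≤ k) (a : Fin k → Fin k → ZMod 2)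
    (r : ℕ)
    (hr : r = (Finset.univ.filter
      (fun q : Fin k => l ≤ (q : ℕ) ∧ ∃ p : Fin k, p < q ∧ a p q = 1)).card) :
    Nonempty (Abelianization (PresentedGroup (gbmRels k l a)) ≃*
      Multiplicative ((Fin (k - l - r) → ℤ) × (Fin (l + r) → ZMod 2))) := by
  classical
  obtain ⟨e⟩ := gbm_equiv k l a
  have hT : Fintype.card {i // gbmT k l a i} = l + r := by
    rw [Fintype.card_subtype]
    have : (Finset.univ.filter (fun i => gbmT k l a i)) =
        (Finset.univ.filter (fun q : Fin k => (q : ℕ) < l)) ∪ (Finset.univ.filter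
      (fun q : Fin k => l ≤ (q : ℕ) ∧ ∃ p : Fin k, p < q ∧ a p q = 1)) := by
      ext q
      rw [Finset.mem_union, Finset.mem_filter, Finset.mem_filter, Finset.mem_filter]
      simp only [Finset.mem_univ, true_and]
      exact Iff.rfl
    rw [this, Finset.card_union_of_disjoint]
    · rw [Fin.card_filter_val_lt, min_eq_right hl, hr]
    · rw [Finset.disjoint_left]
      intro q h1 h2
      simp only [Finset.mem_filter] at h1 h2
      omega
  have hN : Fintype.card {i // ¬ gbmT k l a i} = k - l - r := by
    rw [Fintype.card_subtype_compl, hT, Fintype.card_fin]; omega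
  let e1 := Fintype.equivFinOfCardEq hT
  let e2 := Fintype.equivFinOfCardEq hN
  exact ⟨e.trans (AddEquiv.toMultiplicative
    (AddEquiv.prodCongr (AddEquiv.arrowCongr e2 (AddEquiv.refl ℤ))
      (AddEquiv.arrowCongr e1 (AddEquiv.refl (ZMod 2)))))⟩
end

section
/- Suppose A is in unipotent upper triangular form. Then the homogeneous component of degree 2 of the polynomial P equals Σ_{s=1}^{k} T'_s · x_{s,0}² + Σ_{1 ≤ r < s ≤ k} T'_{rs} · x_{r,0} x_{s,0} in 𝔽₂[x_{1,0}, …, x_{k,0}]. -/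
open MvPolynomial

/-- `T'_s = Σ_{i,m} a_{s,m}^i + Σ_{i, m<m'} a_{s,m}^i a_{s,m'}^i
  + Σ_{i<j, m_i, m_j} a_{s,m_i}^i a_{s,m_j}^j ∈ 𝔽₂`. -/
def Tp (k : ℕ) (n : Fin k → ℕ) (a : Fin k → (i : Fin k) → Fin (n i) → ZMod 2)
    (s : Fin k) : ZMod 2 :=
  (∑ i : Fin k, ∑ m : Fin (n i), a s i m)
  + (∑ i : Fin k, ∑ m : Fin (n i),
      ∑ m' ∈ Finset.univ.filter (fun m' : Fin (n i) => m < m'), a s i m * a s i m')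
  + (∑ i : Fin k, ∑ j ∈ Finset.univ.filter (fun j : Fin k => i < j),
      ∑ mi : Fin (n i), ∑ mj : Fin (n j), a s i mi * a s j mj)

/-- `T'_{rs} = 1 + Σ_{i,m} (a_{r,m}^i + a_{s,m}^i) + Σ_{i, m ≠ m'} a_{r,m}^i a_{s,m'}^i
  + Σ_{i ≠ j, m_i, m_j} a_{r,m_i}^i a_{s,m_j}^j ∈ 𝔽₂`. -/
def Tprs (k : ℕ) (n : Fin k → ℕ) (a : Fin k → (i : Fin k) → Fin (n i) → ZMod 2)
    (r s : Fin k) : ZMod 2 :=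
  1 + (∑ i : Fin k, ∑ m : Fin (n i), (a r i m + a s i m))
  + (∑ i : Fin k, ∑ m : Fin (n i),
      ∑ m' ∈ Finset.univ.filter (fun m' : Fin (n i) => m' ≠ m), a r i m * a s i m')
  + (∑ i : Fin k, ∑ j ∈ Finset.univ.filter (fun j : Fin k => j ≠ i),
      ∑ mi : Fin (n i), ∑ mj : Fin (n j), a r i mi * a s j mj)

/-- `T_s = Σ_{i, m<m'} a_{s,m}^i a_{s,m'}^i + Σ_{i<j, m_i, m_j} a_{s,m_i}^i a_{s,m_j}^j ∈ 𝔽₂`. -/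
def Tq (k : ℕ) (n : Fin k → ℕ) (a : Fin k → (i : Fin k) → Fin (n i) → ZMod 2)
    (s : Fin k) : ZMod 2 :=
  (∑ i : Fin k, ∑ m : Fin (n i),
      ∑ m' ∈ Finset.univ.filter (fun m' : Fin (n i) => m < m'), a s i m * a s i m')
  + (∑ i : Fin k, ∑ j ∈ Finset.univ.filter (fun j : Fin k => i < j),
      ∑ mi : Fin (n i), ∑ mj : Fin (n j), a s i mi * a s j mj)

/-- `T_{rs} = Σ_{i,m} a_{r,m}^i a_{s,m}^i ∈ 𝔽₂`. -/
def Trs (k : ℕ) (n : Fin k → ℕ) (a : Fin k → (i : Fin k) → Fin (n i) → ZMod 2)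
    (r s : Fin k) : ZMod 2 :=
  ∑ i : Fin k, ∑ m : Fin (n i), a r i m * a s i m

/-- `P` has all its monomials of degree at least `N`. -/
def Low12 {σ : Type*} (N : ℕ) (P : MvPolynomial σ (ZMod 2)) : Prop :=
  ∀ d : σ →₀ ℕ, d.degree < N → coeff d P = 0

theorem Low12.mul {σ : Type*} {M N : ℕ} {P Q : MvPolynomial σ (ZMod 2)}
    (hP : Low12 M P) (hQ : Low12 N Q) : Low12 (M + N) (P * Q) := by
  classical
  intro d hd
  rw [coeff_mul]
  refine Finset.sum_eq_zero fun e he => ?_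
  rw [Finset.HasAntidiagonal.mem_antidiagonal] at he
  have h : e.1.degree + e.2.degree = d.degree := by rw [← he, map_add]
  by_cases h1 : e.1.degree < M
  · rw [hP _ h1, zero_mul]
  · rw [hQ _ (by omega), mul_zero]

theorem Low12.add {σ : Type*} {N : ℕ} {P Q : MvPolynomial σ (ZMod 2)}
    (hP : Low12 N P) (hQ : Low12 N Q) : Low12 N (P + Q) := by
  intro d hd
  rw [coeff_add, hP d hd, hQ d hd, add_zero]

theorem Low12.mono {σ : Type*} {M N : ℕ} {P : MvPolynomial σ (ZMod 2)}
    (hP : Low12 N P) (h : M ≤ N) : Low12 M P := fun d hd => hP d (by omega)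

theorem Low12.of_hom {σ : Type*} {N : ℕ} {P : MvPolynomial σ (ZMod 2)}
    (hP : P.IsHomogeneous N) : Low12 N P := fun d hd =>
  hP.coeff_eq_zero (by omega)

/-- `P = 1 + l + q + (degree at least 3)`. -/
def Jet12 {σ : Type*} (P l q : MvPolynomial σ (ZMod 2)) : Prop :=
  l.IsHomogeneous 1 ∧ q.IsHomogeneous 2 ∧ ∃ R, Low12 3 R ∧ P = 1 + l + q + R

theorem Jet12.mul {σ : Type*} {P l q P' l' q' : MvPolynomial σ (ZMod 2)}
    (h : Jet12 P l q) (h' : Jet12 P' l' q') :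
    Jet12 (P * P') (l + l') (q + q' + l * l') := by
  obtain ⟨hl, hq, R, hR, rfl⟩ := h
  obtain ⟨hl', hq', R', hR', rfl⟩ := h'
  refine ⟨hl.add hl', (hq.add hq').add (hl.mul hl'),
    R + R' + (l * q' + l' * q + q * q') + ((l + q + R) * R' + R * (l' + q')), ?_, by ring⟩
  have L := Low12.of_hom hl
  have L' := Low12.of_hom hl'
  have Q := Low12.of_hom hq
  have Q' := Low12.of_hom hq'
  refine ((hR.add hR').add (((L.mul Q').add (L'.mul Q)).add ((Q.mul Q').mono (by omega)))).add ?_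
  refine Low12.add ?_ ?_
  · exact (((L.add (Q.mono (by omega))).add (hR.mono (by omega))).mul hR').mono (by omega)
  · exact (hR.mul (L'.add (Q'.mono (by omega)))).mono (by omega)

theorem Jet12.comp {σ : Type*} {P l q : MvPolynomial σ (ZMod 2)} (h : Jet12 P l q) :
    homogeneousComponent 2 P = q := by
  obtain ⟨hl, hq, R, hR, rfl⟩ := h
  have h1 : homogeneousComponent 2 (1 : MvPolynomial σ (ZMod 2)) = 0 := by
    rw [homogeneousComponent_of_mem (isHomogeneous_one σ (ZMod 2))]; simp
  have h2 : homogeneousComponent 2 l = 0 := by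
    rw [homogeneousComponent_of_mem hl]; simp
  have h3 : homogeneousComponent 2 R = 0 := by
    ext d
    rw [coeff_homogeneousComponent]
    split_ifs with hd
    · rw [hR d (by omega), coeff_zero]
    · simp
  rw [map_add, map_add, map_add, h1, h2, h3, homogeneousComponent_eq_self hq]
  simp

theorem Jet12.one_add {σ : Type*} {l : MvPolynomial σ (ZMod 2)} (h : l.IsHomogeneous 1) :
    Jet12 (1 + l) l 0 :=
  ⟨h, isHomogeneous_zero _ _ _, 0, fun d _ => coeff_zero d, by ring⟩

theorem Jet12.prod {σ ι : Type*} [LinearOrder ι] (s : Finset ι)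
    (P l q : ι → MvPolynomial σ (ZMod 2)) (h : ∀ i, Jet12 (P i) (l i) (q i)) :
    Jet12 (∏ i ∈ s, P i) (∑ i ∈ s, l i)
      (∑ i ∈ s, q i + ∑ i ∈ s, ∑ j ∈ s with i < j, l i * l j) := by
  induction s using Finset.induction_on_min with
  | empty => exact ⟨by simpa using isHomogeneous_zero _ _ _, by simpa using isHomogeneous_zero _ _ _,
      0, fun d _ => coeff_zero d, by simp⟩
  | insert b s hb ih =>
    have hn : b ∉ s := fun h => lt_irrefl _ (hb b h)
    rw [Finset.prod_insert hn, Finset.sum_insert hn, Finset.sum_insert hn, Finset.sum_insert hn]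
    have e1 : (insert b s).filter (fun j => b < j) = s := by
      ext j; simp only [Finset.mem_filter, Finset.mem_insert]
      constructor
      · rintro ⟨rfl | h, h'⟩
        · exact absurd h' (lt_irrefl _)
        · exact h
      · exact fun h => ⟨Or.inr h, hb j h⟩
    have e2 : ∀ i ∈ s, (insert b s).filter (fun j => i < j) = s.filter (fun j => i < j) := by
      intro i hi
      rw [Finset.filter_insert, if_neg (not_lt.2 (hb i hi).le)]
    have e3 : ∑ i ∈ s, ∑ j ∈ insert b s with i < j, l i * l j
        = ∑ i ∈ s, ∑ j ∈ s with i < j, l i * l j :=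
      Finset.sum_congr rfl (fun i hi => by rw [e2 i hi])
    rw [e1, e3, ← Finset.mul_sum]
    convert (h b).mul ih using 1
    ring

theorem split12 {ι M : Type*} [LinearOrder ι] [Fintype ι] [AddCommMonoid M] (f : ι → ι → M) :
    ∑ i, ∑ j with j ≠ i, f i j = ∑ i, ∑ j with i < j, (f i j + f j i) := by
  have h : ∀ i, ∑ j with j ≠ i, f i j = ∑ j with i < j, f i j + ∑ j with j < i, f i j := by
    intro i
    rw [← Finset.sum_union]
    · congr 1
      ext j
      simp only [Finset.mem_filter, Finset.mem_union, Finset.mem_univ, true_and]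
      rw [ne_iff_lt_or_gt, or_comm]
    · rw [Finset.disjoint_filter]
      exact fun j _ h => h.not_gt
  simp only [h, Finset.sum_add_distrib]
  congr 1
  simp only [Finset.sum_filter]
  exact Finset.sum_comm

theorem splitall12 {ι M : Type*} [LinearOrder ι] [Fintype ι] [AddCommMonoid M] (f : ι → ι → M) :
    ∑ i, ∑ j, f i j = ∑ i, f i i + ∑ i, ∑ j with i < j, (f i j + f j i) := by
  rw [← split12, ← Finset.sum_add_distrib]
  refine Finset.sum_congr rfl fun i _ => ?_
  rw [Finset.filter_ne', Finset.add_sum_erase _ _ (Finset.mem_univ i)]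

/-- The quadratic form with coefficients `c`. -/
noncomputable def Quad12 (k : ℕ) : (Fin k → Fin k → ZMod 2) →+ MvPolynomial (Fin k) (ZMod 2) where
  toFun c := ∑ r, ∑ s, C (c r s) * (X r * X s)
  map_zero' := by simp
  map_add' c c' := by simp [add_mul, Finset.sum_add_distrib]

theorem Quad12_eq (k : ℕ) (c : Fin k → Fin k → ZMod 2) :
    Quad12 k c = ∑ s, C (c s s) * X s ^ 2
      + ∑ r, ∑ s with r < s, C (c r s + c s r) * (X r * X s) := by
  change ∑ r, ∑ s, C (c r s) * (X r * X s) = _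
  rw [splitall12]
  congr 1
  · simp [sq]
  · refine Finset.sum_congr rfl fun r _ => Finset.sum_congr rfl fun s _ => ?_
    rw [C_add]; ring

/-- The linear form with coefficients `u`. -/
noncomputable def Lin12 (k : ℕ) : (Fin k → ZMod 2) →+ MvPolynomial (Fin k) (ZMod 2) where
  toFun u := ∑ r, C (u r) * X r
  map_zero' := by simp
  map_add' c c' := by simp [add_mul, Finset.sum_add_distrib]

theorem Lin12_mul (k : ℕ) (u v : Fin k → ZMod 2) :
    Lin12 k u * Lin12 k v = Quad12 k (fun r s => u r * v s) := by
  change (∑ r, C (u r) * X r) * (∑ r, C (v r) * X r) = ∑ r, ∑ s, C (u r * v s) * (X r * X s)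
  rw [Finset.sum_mul_sum]
  refine Finset.sum_congr rfl fun r _ => Finset.sum_congr rfl fun s _ => ?_
  rw [C_mul]; ring

theorem Lin12_hom (k : ℕ) (u : Fin k → ZMod 2) : (Lin12 k u).IsHomogeneous 1 := by
  refine IsHomogeneous.sum _ _ _ fun r _ => ?_
  simpa using (isHomogeneous_C (Fin k) (u r)).mul (isHomogeneous_X (ZMod 2) r)

theorem Lin12_single (k : ℕ) (i : Fin k) : Lin12 k (fun j => if j = i then 1 else 0) = X i := by
  change ∑ r, C (if r = i then (1 : ZMod 2) else 0) * X r = _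
  rw [Finset.sum_eq_single i] <;> simp +contextual

/-- If `A` is in unipotent upper triangular form, then the degree-2 homogeneous
component of `P = ∏_i (1 + x_{i,0}) · ∏_{i,m} (1 + Σ_j a_{j,m}^i x_{j,0})` equals
`Σ_s T'_s x_{s,0}² + Σ_{r<s} T'_{rs} x_{r,0} x_{s,0}` in `𝔽₂[x_{1,0}, …, x_{k,0}]`. -/
theorem stmt_12 (k : ℕ) (hk : 1 ≤ k) (n : Fin k → ℕ) (hn : ∀ i, 1 ≤ n i)
    (a : Fin k → (i : Fin k) → Fin (n i) → ZMod 2)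
    (hUT : ∀ j i : Fin k, i < j → ∀ m : Fin (n i), a j i m = 0)
    (hdiag : ∀ i : Fin k, ∀ m : Fin (n i), a i i m = 1) :
    MvPolynomial.homogeneousComponent 2
        ((∏ i : Fin k, (1 + (X i : MvPolynomial (Fin k) (ZMod 2))))
          * ∏ i : Fin k, ∏ m : Fin (n i), (1 + ∑ j : Fin k, C (a j i m) * X j))
      = (∑ s : Fin k, C (Tp k n a s) * X s ^ 2)
        + ∑ r : Fin k, ∑ s ∈ Finset.univ.filter (fun s : Fin k => r < s),
            C (Tprs k n a r s) * (X r * X s) := by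
  have hA : Jet12 (∏ i : Fin k, (1 + (X i : MvPolynomial (Fin k) (ZMod 2))))
      (Lin12 k fun _ => 1) (Quad12 k fun r s => if r < s then 1 else 0) := by
    have := Jet12.prod Finset.univ (fun i : Fin k => 1 + (X i : MvPolynomial (Fin k) (ZMod 2)))
      (fun i => X i) (fun _ => 0) (fun i => Jet12.one_add (isHomogeneous_X _ _))
    convert this using 1
    · change ∑ r : Fin k, C (1 : ZMod 2) * X r = _
      simp
    · change ∑ r : Fin k, ∑ s : Fin k, C (if r < s then (1 : ZMod 2) else 0) * (X r * X s) = _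
      simp only [Finset.sum_const_zero, zero_add, Finset.sum_filter]
      refine Finset.sum_congr rfl fun r _ => Finset.sum_congr rfl fun s _ => ?_
      split_ifs <;> simp
  have hC : ∀ i : Fin k, Jet12 (∏ m : Fin (n i), (1 + ∑ j : Fin k, C (a j i m) * X j))
      (Lin12 k (∑ m : Fin (n i), fun j => a j i m))
      (Quad12 k (∑ m : Fin (n i), ∑ m' : Fin (n i) with m < m',
        fun r s => a r i m * a s i m')) := by
    intro i
    have h := Jet12.prod Finset.univ (fun m : Fin (n i) => 1 + ∑ j : Fin k, C (a j i m) * X j)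
      (fun m => Lin12 k fun j => a j i m) (fun _ => 0)
      (fun m => Jet12.one_add (Lin12_hom k fun j => a j i m))
    simpa only [Finset.sum_const_zero, zero_add, Lin12_mul, ← map_sum] using h
  have hB := Jet12.prod Finset.univ
    (fun i : Fin k => ∏ m : Fin (n i), (1 + ∑ j : Fin k, C (a j i m) * X j)) _ _ hC
  refine (hA.mul hB).comp.trans ?_
  simp only [← map_sum, Lin12_mul, ← map_add]
  rw [Quad12_eq]
  simp only [Finset.sum_apply, Pi.add_apply, lt_irrefl, if_false, one_mul, Finset.sum_mul_sum]
  refine congrArg₂ _ ?_ ?_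
  · refine Finset.sum_congr rfl fun s _ => ?_
    refine congrArg (fun c => C c * X s ^ 2) ?_
    unfold Tp
    rw [zero_add, add_comm, add_assoc]
  · refine Finset.sum_congr rfl fun r _ => Finset.sum_congr rfl fun s hs => ?_
    have hrs : r < s := (Finset.mem_filter.1 hs).2
    refine congrArg (fun c => C c * (X r * X s)) ?_
    unfold Tprs
    rw [if_pos hrs, if_neg hrs.not_gt, split12]
    have e : ∀ i j : Fin k, ∑ x : Fin (n j), ∑ y : Fin (n i), a r j x * a s i y
        = ∑ x : Fin (n i), ∑ y : Fin (n j), a s i x * a r j y := by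
      intro i j
      rw [Finset.sum_comm]
      simp only [mul_comm]
    have e' : ∀ i : Fin k, ∑ m : Fin (n i), ∑ m' : Fin (n i) with m' ≠ m, a r i m * a s i m'
        = ∑ m : Fin (n i), ∑ m' : Fin (n i) with m < m', a r i m * a s i m'
        + ∑ m : Fin (n i), ∑ m' : Fin (n i) with m < m', a s i m * a r i m' := by
      intro i
      rw [split12 (fun m m' => a r i m * a s i m')]
      simp only [Finset.sum_add_distrib]
      simp only [mul_comm]
    simp only [e', e, Finset.sum_add_distrib]
    rw [zero_add]
    ac_rfl
end

section
/- Suppose A is in unipotent upper triangular form, n_1, …, n_l ≥ 2 and n_{l+1} = ⋯ = n_k = 1. Then the homogeneous component of degree 2 of the polynomial P is congruent modulo I to Σ_{s=1}^{l} T'_s · x_{s,0}² + Σ_{1 ≤ r < s ≤ l} T'_{rs} · x_{r,0} x_{s,0} + Σ_{1 ≤ r < s ≤ k, s > l} (T'_{rs} + a_{r,1}^s · T'_s) · x_{r,0} x_{s,0}, where 𝔽₂[x_{1,0}, …, x_{k,0}] is regarded as a subring of R. -/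
open MvPolynomial

/-- The ideal `I` of `R = 𝔽₂[x_{i,m} : 1 ≤ i ≤ k, 0 ≤ m ≤ n_i]` generated by the monomials
`x_{i,0} x_{i,1} ⋯ x_{i,n_i}` for each `i`, together with the linear forms
`x_{i,m} + Σ_{j=1}^{i} a_{j,m}^i x_{j,0}` for each `i` and `1 ≤ m ≤ n_i`
(within block `i` the variables `x_{i,1}, …, x_{i,n_i}` are 0-indexed by `m : Fin (n i)`,
`x_{i,m}` being the variable `X ⟨i, m.succ⟩`). -/
noncomputable def bottIdeal (k : ℕ) (n : Fin k → ℕ) (a : Fin k → (i : Fin k) → Fin (n i) → ZMod 2) :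
    Ideal (MvPolynomial (Σ i : Fin k, Fin (n i + 1)) (ZMod 2)) :=
  Ideal.span
    ({p | ∃ i : Fin k, p = ∏ m : Fin (n i + 1), X ⟨i, m⟩} ∪
     {p | ∃ i : Fin k, ∃ m : Fin (n i),
        p = X ⟨i, m.succ⟩ +
          ∑ j ∈ Finset.univ.filter (fun j : Fin k => j ≤ i), C (a j i m) * X ⟨j, 0⟩})

section helpers
variable {σ : Type*}

lemma aux_mul (f g : MvPolynomial σ (ZMod 2)) (d : ℕ) :
    homogeneousComponent d (f * g) = ∑ p ∈ Finset.HasAntidiagonal.antidiagonal d,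
      homogeneousComponent p.1 f * homogeneousComponent p.2 g := by
  classical
  ext m
  rw [coeff_homogeneousComponent, coeff_sum]
  simp only [coeff_mul, coeff_homogeneousComponent]
  rw [Finset.sum_comm]
  have key : ∀ u ∈ Finset.HasAntidiagonal.antidiagonal m, (∑ p ∈ Finset.HasAntidiagonal.antidiagonal d,
      (if u.1.degree = p.1 then coeff u.1 f else 0) * (if u.2.degree = p.2 then coeff u.2 g else 0))
      = if m.degree = d then coeff u.1 f * coeff u.2 g else 0 := by
    intro u hu
    have hm : m.degree = u.1.degree + u.2.degree := by
      rw [← Finset.HasAntidiagonal.mem_antidiagonal.1 hu, map_add]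
    split_ifs with h
    · rw [Finset.sum_eq_single (u.1.degree, u.2.degree)]
      · simp
      · rintro ⟨i, j⟩ _ hne
        by_cases h1 : u.1.degree = i
        · by_cases h2 : u.2.degree = j
          · exact absurd (by rw [h1, h2]) hne
          · simp [h2]
        · simp [h1]
      · intro hn
        exact absurd (Finset.HasAntidiagonal.mem_antidiagonal.2 (by rw [← h, hm])) hn
    · refine Finset.sum_eq_zero ?_
      rintro ⟨i, j⟩ hp
      have hp := Finset.HasAntidiagonal.mem_antidiagonal.1 hp
      by_cases h1 : u.1.degree = i
      · by_cases h2 : u.2.degree = j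
        · exact absurd (by rw [hm, h1, h2]; exact hp) h
        · simp [h2]
      · simp [h1]
  rw [Finset.sum_congr rfl key]
  split_ifs <;> simp

lemma aux_hc (f g : MvPolynomial σ (ZMod 2)) (hf : homogeneousComponent 0 f = 1)
    (hg : homogeneousComponent 0 g = 1) :
    homogeneousComponent 0 (f * g) = 1 ∧
    homogeneousComponent 1 (f * g) = homogeneousComponent 1 f + homogeneousComponent 1 g ∧
    homogeneousComponent 2 (f * g) = homogeneousComponent 2 f + homogeneousComponent 2 g
      + homogeneousComponent 1 f * homogeneousComponent 1 g := by
  have e1 : Finset.HasAntidiagonal.antidiagonal 1 = {(0, 1), (1, 0)} := rfl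
  have e2 : Finset.HasAntidiagonal.antidiagonal 2 = {(0, 2), (1, 1), (2, 0)} := rfl
  refine ⟨?_, ?_, ?_⟩
  · rw [aux_mul]
    simp [-homogeneousComponent_zero, hf, hg]
  · rw [aux_mul, e1, Finset.sum_pair (by simp), hf, hg]
    ring
  · rw [aux_mul, e2, Finset.sum_insert (by simp), Finset.sum_pair (by simp), hf, hg]
    ring

lemma aux_prod {ι : Type*} [LinearOrder ι] (Q : ι → MvPolynomial σ (ZMod 2))
    (h0 : ∀ i, homogeneousComponent 0 (Q i) = 1) (S : Finset ι) :
    homogeneousComponent 0 (∏ i ∈ S, Q i) = 1 ∧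
    homogeneousComponent 1 (∏ i ∈ S, Q i) = ∑ i ∈ S, homogeneousComponent 1 (Q i) ∧
    homogeneousComponent 2 (∏ i ∈ S, Q i) = ∑ i ∈ S, homogeneousComponent 2 (Q i)
      + ∑ i ∈ S, ∑ j ∈ S.filter (fun j => i < j),
          homogeneousComponent 1 (Q i) * homogeneousComponent 1 (Q j) := by
  induction S using Finset.induction_on_max with
  | empty =>
    have h1 : (1 : MvPolynomial σ (ZMod 2)).IsHomogeneous 0 := isHomogeneous_one _ _
    refine ⟨?_, ?_, ?_⟩ <;> simp [homogeneousComponent_of_mem h1]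
  | insert x S hx ih =>
    have hxS : x ∉ S := fun h => lt_irrefl _ (hx x h)
    obtain ⟨i0, i1, i2⟩ := ih
    obtain ⟨j0, j1, j2⟩ := aux_hc (Q x) (∏ i ∈ S, Q i) (h0 x) i0
    rw [Finset.prod_insert hxS]
    refine ⟨j0, ?_, ?_⟩
    · rw [j1, i1, Finset.sum_insert hxS]
    · rw [j2, i1, i2, Finset.sum_insert hxS, Finset.sum_insert hxS]
      have e1 : (insert x S).filter (fun j => x < j) = ∅ := by
        ext j
        simp only [Finset.mem_filter, Finset.mem_insert, Finset.notMem_empty, iff_false]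
        rintro ⟨rfl | h, h'⟩
        · exact lt_irrefl _ h'
        · exact lt_asymm h' (hx j h)
      have e2 : ∀ i ∈ S, ∑ j ∈ (insert x S).filter (fun j => i < j),
          homogeneousComponent 1 (Q i) * homogeneousComponent 1 (Q j)
          = homogeneousComponent 1 (Q i) * homogeneousComponent 1 (Q x) +
            ∑ j ∈ S.filter (fun j => i < j),
              homogeneousComponent 1 (Q i) * homogeneousComponent 1 (Q j) := by
        intro i hi
        rw [Finset.filter_insert, if_pos (hx i hi), Finset.sum_insert (by simp [hxS])]
      rw [e1, Finset.sum_congr rfl e2, Finset.sum_add_distrib, ← Finset.sum_mul]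
      simp only [Finset.sum_empty]
      ring

lemma aux_lin (L : MvPolynomial σ (ZMod 2)) (hL : L.IsHomogeneous 1) :
    homogeneousComponent 0 (1 + L) = 1 ∧ homogeneousComponent 1 (1 + L) = L ∧
    homogeneousComponent 2 (1 + L) = 0 := by
  have h1 : (1 : MvPolynomial σ (ZMod 2)).IsHomogeneous 0 := isHomogeneous_one _ _
  refine ⟨?_, ?_, ?_⟩ <;>
    simp [-homogeneousComponent_zero, homogeneousComponent_of_mem h1,
      homogeneousComponent_of_mem hL]

/-- quadratic form with given coefficients -/
noncomputable def QQ {k : ℕ} (x : Fin k → MvPolynomial σ (ZMod 2)) (c : Fin k → ZMod 2)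
    (d : Fin k → Fin k → ZMod 2) : MvPolynomial σ (ZMod 2) :=
  ∑ s, C (c s) * x s ^ 2 + ∑ r, ∑ s ∈ Finset.univ.filter (fun s => r < s), C (d r s) * (x r * x s)

lemma QQ_add {k : ℕ} (x : Fin k → MvPolynomial σ (ZMod 2)) (c c' : Fin k → ZMod 2)
    (d d' : Fin k → Fin k → ZMod 2) : QQ x c d + QQ x c' d' =
      QQ x (fun s => c s + c' s) (fun r s => d r s + d' r s) := by
  simp only [QQ, C_add, add_mul, Finset.sum_add_distrib]
  ring

lemma QQ_sum {k : ℕ} {ι : Type*} (x : Fin k → MvPolynomial σ (ZMod 2)) (S : Finset ι)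
    (c : ι → Fin k → ZMod 2) (d : ι → Fin k → Fin k → ZMod 2) :
    ∑ i ∈ S, QQ x (c i) (d i) = QQ x (fun s => ∑ i ∈ S, c i s) (fun r s => ∑ i ∈ S, d i r s) := by
  classical
  induction S using Finset.induction_on with
  | empty => simp [QQ]
  | insert i S hi ih => simp only [Finset.sum_insert hi, ih, QQ_add]

lemma sum_offdiag {M ι : Type*} [AddCommMonoid M] [LinearOrder ι] [Fintype ι] (f : ι → ι → M) :
    ∑ i, ∑ j ∈ Finset.univ.filter (fun j => j ≠ i), f i j =
      ∑ i, ∑ j ∈ Finset.univ.filter (fun j => i < j), (f i j + f j i) := by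
  have h : ∀ i, ∑ j ∈ Finset.univ.filter (fun j => j ≠ i), f i j =
    ∑ j ∈ Finset.univ.filter (fun j => i < j), f i j +
    ∑ j ∈ Finset.univ.filter (fun j => j < i), f i j := by
    intro i
    rw [← Finset.sum_union]
    · refine Finset.sum_congr ?_ fun _ _ => rfl
      ext j
      simp only [Finset.mem_filter, Finset.mem_univ, true_and, Finset.mem_union]
      rw [ne_iff_lt_or_gt, or_comm]
    · rw [Finset.disjoint_filter]
      intro j _ h h'
      exact lt_asymm h h'
  simp only [h, Finset.sum_add_distrib]
  congr 1
  simp only [Finset.sum_filter]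
  exact Finset.sum_comm

lemma QQ_mul {k : ℕ} (x : Fin k → MvPolynomial σ (ZMod 2)) (α β : Fin k → ZMod 2) :
    (∑ u, C (α u) * x u) * (∑ v, C (β v) * x v) =
      QQ x (fun s => α s * β s) (fun r s => α r * β s + α s * β r) := by
  rw [Finset.sum_mul_sum]
  have h : ∀ i, ∑ j, C (α i) * x i * (C (β j) * x j) = C (α i * β i) * x i ^ 2 +
      ∑ j ∈ Finset.univ.filter (fun j => j ≠ i), C (α i) * x i * (C (β j) * x j) := by
    intro i
    rw [Finset.filter_ne', ← Finset.add_sum_erase _ _ (Finset.mem_univ i), C_mul]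
    ring
  simp only [h, Finset.sum_add_distrib, QQ]
  rw [sum_offdiag]
  congr 1
  refine Finset.sum_congr rfl fun i _ => Finset.sum_congr rfl fun j _ => ?_
  simp only [C_add, C_mul]
  ring

end helpers

lemma aux_main (k : ℕ) (n : Fin k → ℕ)
    (a : Fin k → (i : Fin k) → Fin (n i) → ZMod 2) :
    (MvPolynomial.homogeneousComponent 2
        ((∏ i : Fin k, (1 + X (⟨i, 0⟩ : Σ i : Fin k, Fin (n i + 1))))
          * ∏ i : Fin k, ∏ m : Fin (n i),
              (1 + ∑ j : Fin k, C (a j i m) * X (⟨j, 0⟩ : Σ i : Fin k, Fin (n i + 1)))))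
      = QQ (fun i => X (⟨i, 0⟩ : Σ i : Fin k, Fin (n i + 1))) (Tp k n a) (Tprs k n a) := by
  set x : Fin k → MvPolynomial (Σ i : Fin k, Fin (n i + 1)) (ZMod 2) :=
    fun i => X (⟨i, 0⟩ : Σ i : Fin k, Fin (n i + 1)) with hx
  have hx1 : ∀ i, (x i).IsHomogeneous 1 := fun i => isHomogeneous_X _ _
  have hL1 : ∀ i m, (∑ j : Fin k, C (a j i m) * x j).IsHomogeneous 1 := by
    intro i m
    refine IsHomogeneous.sum _ _ _ fun j _ => ?_
    simpa using (isHomogeneous_C _ (a j i m)).mul (hx1 j)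
  have A := aux_prod (fun i => 1 + x i) (fun i => (aux_lin _ (hx1 i)).1) Finset.univ
  have B := fun i => aux_prod (fun m => 1 + ∑ j : Fin k, C (a j i m) * x j)
    (fun m => (aux_lin _ (hL1 i m)).1) Finset.univ
  have D := aux_prod (fun i => ∏ m, (1 + ∑ j : Fin k, C (a j i m) * x j))
    (fun i => (B i).1) Finset.univ
  have E := aux_hc _ _ A.1 D.1
  simp only [fun i => (aux_lin _ (hx1 i)).2.1, fun i => (aux_lin _ (hx1 i)).2.2,
    Finset.sum_const_zero, zero_add] at A
  simp only [fun i m => (aux_lin _ (hL1 i m)).2.1, fun i m => (aux_lin _ (hL1 i m)).2.2,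
    Finset.sum_const_zero, zero_add] at B
  simp only [fun i => (B i).2.1, fun i => (B i).2.2] at D
  change homogeneousComponent 2 ((∏ i, (1 + x i)) * ∏ i, ∏ m, (1 + ∑ j : Fin k, C (a j i m) * x j)) = _
  rw [E.2.2, A.2.1, A.2.2, D.2.1, D.2.2]
  have f1 : ∑ i, ∑ j ∈ Finset.univ.filter (fun j => i < j), x i * x j
      = QQ x (fun _ => 0) (fun _ _ => 1) := by
    simp [QQ]
  have f2 : ∑ i, x i = ∑ i, C ((fun _ => 1 : Fin k → ZMod 2) i) * x i := by simp
  have f3 : ∀ i, ∑ m, ∑ j, C (a j i m) * x j = ∑ j, C (∑ m, a j i m) * x j := by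
    intro i
    rw [Finset.sum_comm]
    simp only [map_sum, Finset.sum_mul]
  have f4 : ∑ i, ∑ j, C (∑ m, a j i m) * x j = ∑ j, C (∑ i, ∑ m, a j i m) * x j := by
    rw [Finset.sum_comm]
    simp only [map_sum, Finset.sum_mul]
  rw [f1, f2]
  simp only [f3]
  rw [f4]
  simp only [QQ_mul, QQ_sum, QQ_add]
  congr 1
  · funext s
    simp only [Tp, Finset.sum_mul_sum]
    ring
  · funext r s
    simp only [Tprs]
    simp only [sum_offdiag]
    simp only [Finset.sum_mul_sum, Finset.sum_add_distrib]
    have : ∀ i j, ∑ x : Fin (n j), ∑ y : Fin (n i), a r j x * a s i y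
        = ∑ y : Fin (n i), ∑ x : Fin (n j), a s i y * a r j x := by
      intro i j
      rw [Finset.sum_comm]
      simp only [mul_comm]
    simp only [this, mul_comm]
    ring

lemma aux_sq (k : ℕ) (n : Fin k → ℕ) (hn : ∀ i, 1 ≤ n i)
    (a : Fin k → (i : Fin k) → Fin (n i) → ZMod 2)
    (hdiag : ∀ i : Fin k, ∀ m : Fin (n i), a i i m = 1) (s : Fin k) (h1 : n s = 1) :
    X (⟨s, 0⟩ : Σ i : Fin k, Fin (n i + 1)) ^ 2 -
      ∑ r ∈ Finset.univ.filter (fun r => r < s), C (a r s ⟨0, hn s⟩) *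
       (X (⟨r, 0⟩ : Σ i : Fin k, Fin (n i + 1)) * X (⟨s, 0⟩ : Σ i : Fin k, Fin (n i + 1)))
      ∈ bottIdeal k n a := by
  have g1 : X (⟨s, 0⟩ : Σ i : Fin k, Fin (n i + 1)) *
      X (⟨s, (⟨0, hn s⟩ : Fin (n s)).succ⟩ : Σ i : Fin k, Fin (n i + 1)) ∈ bottIdeal k n a := by
    refine Ideal.subset_span (Or.inl ⟨s, ?_⟩)
    rw [Fin.prod_univ_succ]
    congr 1
    symm
    refine Fintype.prod_eq_single _ fun m hm => ?_
    exact absurd (Fin.ext (by have := m.2; simp; omega)) hm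
  have g2 : X (⟨s, (⟨0, hn s⟩ : Fin (n s)).succ⟩ : Σ i : Fin k, Fin (n i + 1)) +
      ∑ j ∈ Finset.univ.filter (fun j : Fin k => j ≤ s), C (a j s ⟨0, hn s⟩) * X ⟨j, 0⟩
        ∈ bottIdeal k n a :=
    Ideal.subset_span (Or.inr ⟨s, _, rfl⟩)
  have g3 := sub_mem (Ideal.mul_mem_left _ (X (⟨s, 0⟩ : Σ i : Fin k, Fin (n i + 1))) g2) g1
  have e : Finset.univ.filter (fun j : Fin k => j ≤ s) =
      insert s (Finset.univ.filter (fun j : Fin k => j < s)) := by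
    ext j
    simp [le_iff_eq_or_lt]
  rw [e, Finset.sum_insert (by simp), hdiag, C_1, one_mul] at g3
  rw [CharTwo.sub_eq_add]
  convert g3 using 1
  have : ∑ r ∈ Finset.univ.filter (fun r => r < s), C (a r s ⟨0, hn s⟩) *
       (X (⟨r, 0⟩ : Σ i : Fin k, Fin (n i + 1)) * X (⟨s, 0⟩ : Σ i : Fin k, Fin (n i + 1)))
     = X (⟨s, 0⟩ : Σ i : Fin k, Fin (n i + 1)) * ∑ r ∈ Finset.univ.filter (fun r => r < s),
       C (a r s ⟨0, hn s⟩) * X (⟨r, 0⟩ : Σ i : Fin k, Fin (n i + 1)) := by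
    rw [Finset.mul_sum]
    exact Finset.sum_congr rfl fun _ _ => by ring
  rw [this]
  ring

/-- Suppose `A` is in unipotent upper triangular form, `n_1, …, n_l ≥ 2` and
`n_{l+1} = ⋯ = n_k = 1`.  Then the degree-2 homogeneous component of
`P = ∏_i (1 + x_{i,0}) · ∏_{i,m} (1 + Σ_j a_{j,m}^i x_{j,0})` (regarded as an element of `R`) is
congruent modulo `I` to
`Σ_{s ≤ l} T'_s x_{s,0}² + Σ_{r<s≤l} T'_{rs} x_{r,0} x_{s,0}
  + Σ_{r<s, s>l} (T'_{rs} + a_{r,1}^s T'_s) x_{r,0} x_{s,0}`. -/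
theorem stmt_13 (k l : ℕ) (hk : 1 ≤ k) (hl : l ≤ k) (n : Fin k → ℕ) (hn : ∀ i, 1 ≤ n i)
    (a : Fin k → (i : Fin k) → Fin (n i) → ZMod 2)
    (hUT : ∀ j i : Fin k, i < j → ∀ m : Fin (n i), a j i m = 0)
    (hdiag : ∀ i : Fin k, ∀ m : Fin (n i), a i i m = 1)
    (h2 : ∀ i : Fin k, (i : ℕ) < l → 2 ≤ n i)
    (h1 : ∀ i : Fin k, l ≤ (i : ℕ) → n i = 1) :
    (MvPolynomial.homogeneousComponent 2
        ((∏ i : Fin k, (1 + X (⟨i, 0⟩ : Σ i : Fin k, Fin (n i + 1))))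
          * ∏ i : Fin k, ∏ m : Fin (n i),
              (1 + ∑ j : Fin k, C (a j i m) * X (⟨j, 0⟩ : Σ i : Fin k, Fin (n i + 1)))))
      - ((∑ s ∈ Finset.univ.filter (fun s : Fin k => (s : ℕ) < l),
            C (Tp k n a s) * X (⟨s, 0⟩ : Σ i : Fin k, Fin (n i + 1)) ^ 2)
        + (∑ r : Fin k, ∑ s ∈ Finset.univ.filter (fun s : Fin k => r < s ∧ (s : ℕ) < l),
            C (Tprs k n a r s)
              * (X (⟨r, 0⟩ : Σ i : Fin k, Fin (n i + 1))
                * X (⟨s, 0⟩ : Σ i : Fin k, Fin (n i + 1))))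
        + (∑ r : Fin k, ∑ s ∈ Finset.univ.filter (fun s : Fin k => r < s ∧ l ≤ (s : ℕ)),
            C (Tprs k n a r s + a r s ⟨0, hn s⟩ * Tp k n a s)
              * (X (⟨r, 0⟩ : Σ i : Fin k, Fin (n i + 1))
                * X (⟨s, 0⟩ : Σ i : Fin k, Fin (n i + 1)))))
      ∈ bottIdeal k n a := by
  rw [aux_main]
  have key : ∑ s ∈ Finset.univ.filter (fun s : Fin k => l ≤ (s : ℕ)), C (Tp k n a s) *
      (X (⟨s, 0⟩ : Σ i : Fin k, Fin (n i + 1)) ^ 2 -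
      ∑ r ∈ Finset.univ.filter (fun r => r < s), C (a r s ⟨0, hn s⟩) *
       (X (⟨r, 0⟩ : Σ i : Fin k, Fin (n i + 1)) * X (⟨s, 0⟩ : Σ i : Fin k, Fin (n i + 1))))
      ∈ bottIdeal k n a := by
    refine sum_mem fun s hs => Ideal.mul_mem_left _ _ (aux_sq k n hn a hdiag s (h1 s ?_))
    simpa using hs
  convert key using 1
  simp only [QQ, mul_sub, Finset.sum_sub_distrib, C_add, add_mul, Finset.sum_add_distrib]
  have s1 := Finset.sum_filter_add_sum_filter_not Finset.univ (fun s : Fin k => (s : ℕ) < l)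
    (fun s => C (Tp k n a s) * X (⟨s, 0⟩ : Σ i : Fin k, Fin (n i + 1)) ^ 2)
  have s2 := fun r : Fin k => Finset.sum_filter_add_sum_filter_not
    (Finset.univ.filter (fun s : Fin k => r < s)) (fun s : Fin k => (s : ℕ) < l)
    (fun s => C (Tprs k n a r s) * (X (⟨r, 0⟩ : Σ i : Fin k, Fin (n i + 1))
                * X (⟨s, 0⟩ : Σ i : Fin k, Fin (n i + 1))))
  simp only [Finset.filter_filter, not_lt] at s1 s2
  have s3 : ∑ s ∈ Finset.univ.filter (fun s : Fin k => l ≤ (s : ℕ)), C (Tp k n a s) *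
      ∑ r ∈ Finset.univ.filter (fun r => r < s), C (a r s ⟨0, hn s⟩) *
       (X (⟨r, 0⟩ : Σ i : Fin k, Fin (n i + 1)) * X (⟨s, 0⟩ : Σ i : Fin k, Fin (n i + 1)))
      = ∑ r : Fin k, ∑ s ∈ Finset.univ.filter (fun s : Fin k => r < s ∧ l ≤ (s : ℕ)),
        C (a r s ⟨0, hn s⟩ * Tp k n a s) *
       (X (⟨r, 0⟩ : Σ i : Fin k, Fin (n i + 1)) * X (⟨s, 0⟩ : Σ i : Fin k, Fin (n i + 1))) := by
    simp only [Finset.sum_filter, Finset.mul_sum, ite_and]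
    rw [Finset.sum_comm]
    refine Finset.sum_congr rfl fun s _ => ?_
    by_cases h : l ≤ (s : ℕ)
    · simp only [h, if_true, Finset.mul_sum]
      refine Finset.sum_congr rfl fun r _ => ?_
      split_ifs <;> simp [C_mul]
      ring
    · simp [h]
  rw [s3, ← s1]
  simp only [← s2, Finset.sum_add_distrib]
  ring
end

section
/- Suppose A is in unipotent upper triangular form. Then for any coefficients c_1, …, c_k ∈ 𝔽₂, the linear form Σ_{j=1}^{k} c_j x_{j,0} belongs to the ideal I if and only if c_j = 0 for all j. Consequently, the element Σ_{j=1}^{k} (1 + Σ_{i=1}^{k} Σ_{m=1}^{n_i} a_{j,m}^i) · x_{j,0} belongs to I if and only if Σ_{i=1}^{k} Σ_{m=1}^{n_i} a_{j,m}^i = 1 in 𝔽₂ for every 1 ≤ j ≤ k. -/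
open MvPolynomial

/-- Values used to detect the coefficient of `x_{j,0}` in the dual numbers. -/
noncomputable def dualCoef (k : ℕ) (n : Fin k → ℕ) (a : Fin k → (i : Fin k) → Fin (n i) → ZMod 2)
    (j₀ : Fin k) (i : Fin k) : Fin (n i + 1) → ZMod 2 :=
  Fin.cases (if i = j₀ then 1 else 0)
    (fun m => -∑ j ∈ Finset.univ.filter (fun j : Fin k => j ≤ i),
      a j i m * (if j = j₀ then 1 else 0))

/-- The substitution into the dual numbers. -/
noncomputable def dualHom (k : ℕ) (n : Fin k → ℕ) (a : Fin k → (i : Fin k) → Fin (n i) → ZMod 2)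
    (j₀ : Fin k) :
    MvPolynomial (Σ i : Fin k, Fin (n i + 1)) (ZMod 2) →ₐ[ZMod 2] TrivSqZeroExt (ZMod 2) (ZMod 2) :=
  aeval (fun p => TrivSqZeroExt.inr (dualCoef k n a j₀ p.1 p.2))

lemma dualHom_lin (k : ℕ) (n : Fin k → ℕ) (a : Fin k → (i : Fin k) → Fin (n i) → ZMod 2)
    (j₀ : Fin k) (s : Finset (Fin k)) (c : Fin k → ZMod 2) :
    dualHom k n a j₀ (∑ j ∈ s, C (c j) * X (⟨j, 0⟩ : Σ i : Fin k, Fin (n i + 1))) =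
      TrivSqZeroExt.inr (∑ j ∈ s, c j * (if j = j₀ then 1 else 0)) := by
  rw [map_sum, TrivSqZeroExt.inr_sum]
  refine Finset.sum_congr rfl fun j _ => ?_
  simp only [dualHom, map_mul, aeval_C, aeval_X, ← Algebra.smul_def]
  rw [← TrivSqZeroExt.inr_smul]
  simp [dualCoef]

lemma dualHom_mem (k : ℕ) (n : Fin k → ℕ) (hn : ∀ i, 1 ≤ n i)
    (a : Fin k → (i : Fin k) → Fin (n i) → ZMod 2) (j₀ : Fin k)
    {p : MvPolynomial (Σ i : Fin k, Fin (n i + 1)) (ZMod 2)} (hp : p ∈ bottIdeal k n a) :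
    dualHom k n a j₀ p = 0 := by
  suffices h : bottIdeal k n a ≤ RingHom.ker (dualHom k n a j₀) from h hp
  rw [bottIdeal, Ideal.span_le]
  rintro q (⟨i, rfl⟩ | ⟨i, m, rfl⟩)
  · simp only [SetLike.mem_coe, RingHom.mem_ker, map_prod]
    obtain ⟨m, hm⟩ : ∃ m, n i = m + 1 := ⟨n i - 1, by have := hn i; omega⟩
    have h01 : (0 : Fin (n i + 1)) ≠ ⟨1, by omega⟩ := by simp [Fin.ext_iff]
    rw [← Finset.mul_prod_erase _ _ (Finset.mem_univ (0 : Fin (n i + 1))),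
      ← Finset.mul_prod_erase _ _ (Finset.mem_erase.2 ⟨h01.symm, Finset.mem_univ _⟩), ← mul_assoc]
    simp [dualHom]
  · simp only [SetLike.mem_coe, RingHom.mem_ker, map_add]
    rw [dualHom_lin k n a j₀ _ (fun j => a j i m)]
    simp only [dualHom, aeval_X, dualCoef, Fin.cases_succ]
    rw [← TrivSqZeroExt.inr_add, neg_add_cancel, TrivSqZeroExt.inr_zero]

/-- Suppose `A` is in unipotent upper triangular form.  Then a linear form
`Σ_j c_j x_{j,0}` lies in `I` iff all `c_j = 0`; consequently,
`Σ_j (1 + Σ_{i,m} a_{j,m}^i) x_{j,0} ∈ I` iff `Σ_{i,m} a_{j,m}^i = 1` for every `j`. -/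
theorem stmt_14 (k : ℕ) (hk : 1 ≤ k) (n : Fin k → ℕ) (hn : ∀ i, 1 ≤ n i)
    (a : Fin k → (i : Fin k) → Fin (n i) → ZMod 2)
    (hUT : ∀ j i : Fin k, i < j → ∀ m : Fin (n i), a j i m = 0)
    (hdiag : ∀ i : Fin k, ∀ m : Fin (n i), a i i m = 1) :
    (∀ c : Fin k → ZMod 2,
      (∑ j : Fin k, C (c j) * X (⟨j, 0⟩ : Σ i : Fin k, Fin (n i + 1)) ∈ bottIdeal k n a
        ↔ ∀ j : Fin k, c j = 0)) ∧
    ((∑ j : Fin k, C (1 + ∑ i : Fin k, ∑ m : Fin (n i), a j i m)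
        * X (⟨j, 0⟩ : Σ i : Fin k, Fin (n i + 1)) ∈ bottIdeal k n a)
      ↔ ∀ j : Fin k, (∑ i : Fin k, ∑ m : Fin (n i), a j i m) = 1) := by
  have key : ∀ c : Fin k → ZMod 2,
      (∑ j : Fin k, C (c j) * X (⟨j, 0⟩ : Σ i : Fin k, Fin (n i + 1)) ∈ bottIdeal k n a
        ↔ ∀ j : Fin k, c j = 0) := by
    intro c
    constructor
    · intro h j
      have h1 := dualHom_mem k n hn a j h
      rw [dualHom_lin] at h1
      have h2 := congrArg TrivSqZeroExt.snd h1
      simpa using h2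
    · intro h
      simp [h]
  refine ⟨key, (key _).trans (forall_congr' fun j => ?_)⟩
  generalize (∑ i : Fin k, ∑ m : Fin (n i), a j i m) = t
  revert t
  decide
end

section
/- Suppose A is in unipotent upper triangular form, satisfies the orientability condition, and n_1, …, n_l ≥ 2 while n_{l+1} = ⋯ = n_k = 1. Then the element Σ_{s=1}^{l} (1 + T_s) · x_{s,0}² + Σ_{1 ≤ r < s ≤ l} T_{rs} · x_{r,0} x_{s,0} + Σ_{1 ≤ r < s ≤ k, s > l} (T_{rs} + a_{r,1}^s · (1 + T_s)) · x_{r,0} x_{s,0} of R belongs to the ideal I if and only if all of the following hold in 𝔽₂: T_s = 1 for all 1 ≤ s ≤ l; T_{rs} = 0 for all 1 ≤ r < s ≤ l; and T_{rs} + a_{r,1}^s · (1 + T_s) = 0 for all 1 ≤ r < s ≤ k with s > l. -/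
open MvPolynomial

/-- Multiplying a polynomial of order at least two only scales its quadratic coefficients. -/
lemma coeff_mul_low {σ : Type*} (f p : MvPolynomial σ (ZMod 2))
    (hp : ∀ d : σ →₀ ℕ, d.degree < 2 → coeff d p = 0) (d : σ →₀ ℕ) (hd : d.degree ≤ 2) :
    coeff d (f * p) = coeff 0 f * coeff d p := by
  classical
  rw [coeff_mul]
  refine Finset.sum_eq_single (0, d) ?_ ?_
  · rintro ⟨u, v⟩ huv hne
    rw [Finset.HasAntidiagonal.mem_antidiagonal] at huv
    simp only at huv ⊢
    rw [hp v, mul_zero]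
    have hdeg : u.degree + v.degree = d.degree := by rw [← huv, map_add]
    have hu : u.degree ≠ 0 := by
      intro h0
      rw [Finsupp.degree_eq_zero_iff] at h0
      subst h0
      simp at huv
      exact hne (by rw [huv])
    omega
  · intro h
    simp at h

/-- A linear functional on quadratic coefficients vanishing on generators vanishes on the span. -/
lemma span_functional {σ : Type*} (S : Set (MvPolynomial σ (ZMod 2))) (d1 d2 : σ →₀ ℕ)
    (hd1 : d1.degree = 2) (hd2 : d2.degree = 2) (c : ZMod 2)
    (hS : ∀ p ∈ S, (∀ d : σ →₀ ℕ, d.degree < 2 → coeff d p = 0) ∧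
      coeff d1 p + c * coeff d2 p = 0) (p : MvPolynomial σ (ZMod 2)) (hp : p ∈ Ideal.span S) :
    (∀ d : σ →₀ ℕ, d.degree < 2 → coeff d p = 0) ∧ coeff d1 p + c * coeff d2 p = 0 := by
  induction hp using Submodule.span_induction with
  | mem x h => exact hS x h
  | zero => simp
  | add x y _ _ hx hy =>
    refine ⟨fun d hd => by rw [coeff_add, hx.1 d hd, hy.1 d hd, add_zero], ?_⟩
    rw [coeff_add, coeff_add]
    linear_combination hx.2 + hy.2
  | smul f x _ hx =>
    rw [smul_eq_mul]
    refine ⟨fun d hd => by rw [coeff_mul_low f x hx.1 d hd.le, hx.1 d hd, mul_zero], ?_⟩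
    rw [coeff_mul_low f x hx.1 d1 hd1.le, coeff_mul_low f x hx.1 d2 hd2.le]
    linear_combination coeff 0 f * hx.2

/-- The linear form `Σ_{j ≤ i} a_{j,m}^i x_j`. -/
noncomputable def bottLin (k : ℕ) (n : Fin k → ℕ) (a : Fin k → (i : Fin k) → Fin (n i) → ZMod 2)
    (i : Fin k) (m : Fin (n i)) : MvPolynomial (Fin k) (ZMod 2) :=
  ∑ j ∈ Finset.univ.filter (fun j : Fin k => j ≤ i), C (a j i m) * X j

/-- Elimination of the variables `x_{i,m}`, `m ≥ 1`. -/
noncomputable def bottElim (k : ℕ) (n : Fin k → ℕ) (a : Fin k → (i : Fin k) → Fin (n i) → ZMod 2) :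
    MvPolynomial (Σ i : Fin k, Fin (n i + 1)) (ZMod 2) →ₐ[ZMod 2] MvPolynomial (Fin k) (ZMod 2) :=
  aeval (fun v => Fin.cases (motive := fun _ => MvPolynomial (Fin k) (ZMod 2))
    (X v.1) (fun m => bottLin k n a v.1 m) v.2)

/-- The generators of the eliminated ideal. -/
def bottGens (k : ℕ) (n : Fin k → ℕ) (a : Fin k → (i : Fin k) → Fin (n i) → ZMod 2) :
    Set (MvPolynomial (Fin k) (ZMod 2)) :=
  {p | ∃ i : Fin k, p = X i * ∏ m : Fin (n i), bottLin k n a i m}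

lemma bottElim_zero (k : ℕ) (n : Fin k → ℕ) (a : Fin k → (i : Fin k) → Fin (n i) → ZMod 2)
    (i : Fin k) : bottElim k n a (X ⟨i, 0⟩) = X i := by
  simp [bottElim]

lemma bottElim_succ (k : ℕ) (n : Fin k → ℕ) (a : Fin k → (i : Fin k) → Fin (n i) → ZMod 2)
    (i : Fin k) (m : Fin (n i)) : bottElim k n a (X ⟨i, m.succ⟩) = bottLin k n a i m := by
  simp [bottElim]

lemma bottElim_C (k : ℕ) (n : Fin k → ℕ) (a : Fin k → (i : Fin k) → Fin (n i) → ZMod 2)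
    (c : ZMod 2) : bottElim k n a (C c) = C c := by
  simp [bottElim, algebraMap_eq]

lemma bottElim_mem (k : ℕ) (n : Fin k → ℕ) (a : Fin k → (i : Fin k) → Fin (n i) → ZMod 2)
    (p : MvPolynomial (Σ i : Fin k, Fin (n i + 1)) (ZMod 2)) (hp : p ∈ bottIdeal k n a) :
    bottElim k n a p ∈ Ideal.span (bottGens k n a) := by
  have hle : bottIdeal k n a ≤ (Ideal.span (bottGens k n a)).comap (bottElim k n a) := by
    unfold bottIdeal
    rw [Ideal.span_le]
    rintro q (⟨i, rfl⟩ | ⟨i, m, rfl⟩)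
    · rw [SetLike.mem_coe, Ideal.mem_comap, map_prod, Fin.prod_univ_succ, bottElim_zero]
      simp only [bottElim_succ]
      exact Ideal.subset_span ⟨i, rfl⟩
    · rw [SetLike.mem_coe, Ideal.mem_comap, map_add, bottElim_succ, map_sum]
      simp only [map_mul, bottElim_zero, bottElim_C]
      rw [← bottLin, CharTwo.add_self_eq_zero]
      exact Ideal.zero_mem _
  exact hle hp

lemma bottLin_homog (k : ℕ) (n : Fin k → ℕ) (a : Fin k → (i : Fin k) → Fin (n i) → ZMod 2)
    (i : Fin k) (m : Fin (n i)) : (bottLin k n a i m).IsHomogeneous 1 := by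
  unfold bottLin
  refine IsHomogeneous.sum _ _ _ fun j _ => ?_
  simpa using (isHomogeneous_C (Fin k) (a j i m)).mul (isHomogeneous_X (ZMod 2) j)

lemma bottGen_homog (k : ℕ) (n : Fin k → ℕ) (a : Fin k → (i : Fin k) → Fin (n i) → ZMod 2)
    (i : Fin k) : (X i * ∏ m : Fin (n i), bottLin k n a i m).IsHomogeneous (1 + n i) := by
  refine (isHomogeneous_X (ZMod 2) i).mul ?_
  simpa using IsHomogeneous.prod (Finset.univ : Finset (Fin (n i))) (fun m => bottLin k n a i m)
    (fun _ => 1) (fun m _ => bottLin_homog k n a i m)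

lemma coeff_quad {σ : Type*} [DecidableEq σ] (c : ZMod 2) (i j r s : σ) :
    coeff (Finsupp.single r 1 + Finsupp.single s 1) (C c * (X i * X j : MvPolynomial σ (ZMod 2)))
      = if (i = r ∧ j = s) ∨ (i = s ∧ j = r) then c else 0 := by
  have h : (C c * (X i * X j) : MvPolynomial σ (ZMod 2))
      = monomial (Finsupp.single i 1 + Finsupp.single j 1) c := by
    rw [X, X, monomial_mul, C_mul_monomial]; simp
  rw [h, coeff_monomial]
  congr 1
  rw [Finsupp.single_add_single_eq_single_add_single one_ne_zero one_ne_zero]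
  simp

lemma coeff_gen_one (k : ℕ) (n : Fin k → ℕ) (a : Fin k → (i : Fin k) → Fin (n i) → ZMod 2)
    (i : Fin k) (hi : n i = 1) (m0 : Fin (n i)) (r s : Fin k) (hrs : r ≤ s) :
    coeff (Finsupp.single r 1 + Finsupp.single s 1) (X i * ∏ m : Fin (n i), bottLin k n a i m)
      = if i = s then a r i m0 else 0 := by
  have hsub : Subsingleton (Fin (n i)) := by rw [hi]; infer_instance
  rw [Fintype.prod_subsingleton _ m0, bottLin, Finset.mul_sum, coeff_sum]
  have hterm : ∀ j ∈ Finset.univ.filter (fun j : Fin k => j ≤ i),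
      coeff (Finsupp.single r 1 + Finsupp.single s 1)
        (X i * (C (a j i m0) * X j) : MvPolynomial (Fin k) (ZMod 2))
      = if j = r then (if i = s then a r i m0 else 0) else 0 := by
    intro j hj
    rw [Finset.mem_filter] at hj
    have hj' := hj.2
    rw [mul_left_comm, coeff_quad]
    by_cases h1 : j = r
    · subst h1
      by_cases h2 : i = s
      · simp [h2]
      · rw [if_neg, if_pos rfl, if_neg h2]
        rintro (⟨e1, e2⟩ | ⟨e1, -⟩)
        · exact h2 (e1.trans e2)
        · exact h2 e1
    · rw [if_neg, if_neg h1]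
      rintro (⟨e1, e2⟩ | ⟨-, e2⟩)
      · subst e1 e2
        exact h1 (le_antisymm hj' hrs)
      · exact h1 e2
  rw [Finset.sum_congr rfl hterm, Finset.sum_ite_eq']
  by_cases h2 : i = s
  · subst h2
    simp [hrs]
  · simp [h2]

/-- Coefficients of a strictly upper triangular quadratic form. -/
lemma coeff_upper (k : ℕ) (P : Fin k → Prop) [DecidablePred P] (c : Fin k → Fin k → ZMod 2)
    (r s : Fin k) (hrs : r ≤ s) :
    coeff (Finsupp.single r 1 + Finsupp.single s 1)
      (∑ i : Fin k, ∑ j ∈ Finset.univ.filter (fun j : Fin k => i < j ∧ P j),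
        C (c i j) * (X i * X j : MvPolynomial (Fin k) (ZMod 2)))
      = if r < s ∧ P s then c r s else 0 := by
  simp only [coeff_sum, coeff_quad]
  rw [Finset.sum_eq_single r]
  · rw [Finset.sum_filter, Finset.sum_eq_single s]
    · simp
    · intro j _ hj
      split_ifs with h1 h2
      · rcases h2 with ⟨_, h⟩ | ⟨h, h'⟩
        · exact absurd h hj
        · exact absurd (h'.trans h) hj
      · rfl
      · rfl
    · simp
  · intro i _ hi
    refine Finset.sum_eq_zero fun j hj => ?_
    rw [Finset.mem_filter] at hj
    rw [if_neg]
    rintro (⟨h, _⟩ | ⟨h, h'⟩)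
    · exact hi h
    · subst h h'
      exact absurd hj.2.1 (not_lt.mpr hrs)
  · simp

/-- Coefficients of a diagonal quadratic form. -/
lemma coeff_squares (k : ℕ) (P : Fin k → Prop) [DecidablePred P] (c : Fin k → ZMod 2)
    (r s : Fin k) :
    coeff (Finsupp.single r 1 + Finsupp.single s 1)
      (∑ i ∈ Finset.univ.filter P, C (c i) * (X i ^ 2 : MvPolynomial (Fin k) (ZMod 2)))
      = if r = s ∧ P s then c s else 0 := by
  simp only [coeff_sum, pow_two, coeff_quad]
  rw [Finset.sum_filter, Finset.sum_eq_single s]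
  · by_cases h : r = s
    · subst h; simp
    · simp [h, Ne.symm h]
  · intro j _ hj
    split_ifs with h1 h2
    · rcases h2 with ⟨_, h⟩ | ⟨h, _⟩
      · exact absurd h hj
      · exact absurd h hj
    · rfl
    · rfl
  · simp

/-- Suppose `A` is in unipotent upper triangular form, satisfies the
orientability condition, `n_1, …, n_l ≥ 2` and `n_{l+1} = ⋯ = n_k = 1`.  Then
`Σ_{s≤l} (1 + T_s) x_{s,0}² + Σ_{r<s≤l} T_{rs} x_{r,0} x_{s,0}
  + Σ_{r<s, s>l} (T_{rs} + a_{r,1}^s (1 + T_s)) x_{r,0} x_{s,0} ∈ I`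
iff `T_s = 1` for all `s ≤ l`, `T_{rs} = 0` for all `r < s ≤ l`, and
`T_{rs} + a_{r,1}^s (1 + T_s) = 0` for all `r < s` with `s > l`. -/
theorem stmt_16 (k l : ℕ) (hk : 1 ≤ k) (hl : l ≤ k) (n : Fin k → ℕ) (hn : ∀ i, 1 ≤ n i)
    (a : Fin k → (i : Fin k) → Fin (n i) → ZMod 2)
    (hUT : ∀ j i : Fin k, i < j → ∀ m : Fin (n i), a j i m = 0)
    (hdiag : ∀ i : Fin k, ∀ m : Fin (n i), a i i m = 1)
    (hOr : ∀ j : Fin k, (∑ i : Fin k, ∑ m : Fin (n i), a j i m) = 1)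
    (h2 : ∀ i : Fin k, (i : ℕ) < l → 2 ≤ n i)
    (h1 : ∀ i : Fin k, l ≤ (i : ℕ) → n i = 1) :
    ((∑ s ∈ Finset.univ.filter (fun s : Fin k => (s : ℕ) < l),
        C (1 + Tq k n a s) * X (⟨s, 0⟩ : Σ i : Fin k, Fin (n i + 1)) ^ 2)
      + (∑ r : Fin k, ∑ s ∈ Finset.univ.filter (fun s : Fin k => r < s ∧ (s : ℕ) < l),
          C (Trs k n a r s)
            * (X (⟨r, 0⟩ : Σ i : Fin k, Fin (n i + 1))
              * X (⟨s, 0⟩ : Σ i : Fin k, Fin (n i + 1))))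
      + (∑ r : Fin k, ∑ s ∈ Finset.univ.filter (fun s : Fin k => r < s ∧ l ≤ (s : ℕ)),
          C (Trs k n a r s + a r s ⟨0, hn s⟩ * (1 + Tq k n a s))
            * (X (⟨r, 0⟩ : Σ i : Fin k, Fin (n i + 1))
              * X (⟨s, 0⟩ : Σ i : Fin k, Fin (n i + 1))))
      ∈ bottIdeal k n a)
    ↔ ((∀ s : Fin k, (s : ℕ) < l → Tq k n a s = 1) ∧
       (∀ r s : Fin k, r < s → (s : ℕ) < l → Trs k n a r s = 0) ∧
       (∀ r s : Fin k, r < s → l ≤ (s : ℕ) →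
          Trs k n a r s + a r s ⟨0, hn s⟩ * (1 + Tq k n a s) = 0)) := by

  constructor
  · intro hE
    have hE' := bottElim_mem k n a _ hE
    simp only [map_add, map_sum, map_mul, map_pow, bottElim_zero, bottElim_C] at hE'
    simp only [← C_1, ← C_mul, ← C_add] at hE'
    have hdeg : ∀ r s : Fin k,
        (Finsupp.single r 1 + Finsupp.single s 1 : Fin k →₀ ℕ).degree = 2 := by
      intro r s; simp [map_add]
    have key : ∀ r s : Fin k, ∀ c : ZMod 2, r ≤ s →
        (∀ i : Fin k, n i = 1 → i = s → ∀ m : Fin (n i), a r i m + c * a s i m = 0) →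
        ∀ p ∈ Ideal.span (bottGens k n a),
          coeff (Finsupp.single r 1 + Finsupp.single s 1) p
            + c * coeff (Finsupp.single s 1 + Finsupp.single s 1) p = 0 := by
      intro r s c hrs hc p hp
      refine (span_functional _ _ _ (hdeg r s) (hdeg s s) c ?_ p hp).2
      rintro q ⟨i, rfl⟩
      have hni := hn i
      refine ⟨fun d hd => (bottGen_homog k n a i).coeff_eq_zero (by omega), ?_⟩
      by_cases h : n i = 1
      · have m0 : Fin (n i) := ⟨0, hni⟩
        rw [coeff_gen_one k n a i h m0 r s hrs, coeff_gen_one k n a i h m0 s s le_rfl]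
        split_ifs with his
        · exact hc i h his m0
        · simp
      · rw [(bottGen_homog k n a i).coeff_eq_zero (by rw [hdeg]; omega),
          (bottGen_homog k n a i).coeff_eq_zero (by rw [hdeg]; omega)]
        simp
    have hlt : ∀ (r s : Fin k), (s : ℕ) < l → ∀ i : Fin k, n i = 1 → i = s →
        ∀ m : Fin (n i), a r i m + 0 * a s i m = 0 := by
      intro r s hs i hi his
      subst his
      have := h2 i hs
      omega
    refine ⟨fun s hs => ?_, fun r s hrs hs => ?_, fun r s hrs hs => ?_⟩
    · have h := key s s 0 le_rfl (hlt s s hs) _ hE'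
      rw [coeff_add, coeff_add, coeff_squares,
        coeff_upper k (fun s => (s : ℕ) < l) (fun r s => Trs k n a r s) s s le_rfl,
        coeff_upper k (fun s => l ≤ (s : ℕ))
          (fun r s => Trs k n a r s + a r s ⟨0, hn s⟩ * (1 + Tq k n a s)) s s le_rfl] at h
      simp [hs] at h
      exact (CharTwo.add_eq_zero.mp h).symm
    · have h := key r s 0 hrs.le (hlt r s hs) _ hE'
      rw [zero_mul, add_zero, coeff_add, coeff_add, coeff_squares,
        coeff_upper k (fun s => (s : ℕ) < l) (fun r s => Trs k n a r s) r s hrs.le,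
        coeff_upper k (fun s => l ≤ (s : ℕ))
          (fun r s => Trs k n a r s + a r s ⟨0, hn s⟩ * (1 + Tq k n a s)) r s hrs.le] at h
      simpa [hs, hrs, hrs.ne, not_le.mpr hs] using h
    · have h := key r s (a r s ⟨0, hn s⟩) hrs.le (by
        intro i hi his m
        subst his
        have hsub : Subsingleton (Fin (n i)) := by rw [hi]; infer_instance
        rw [hdiag, mul_one, Subsingleton.elim m ⟨0, hn i⟩, CharTwo.add_self_eq_zero]) _ hE'
      simp only [coeff_add] at h
      rw [coeff_squares, coeff_squares,
        coeff_upper k (fun s => (s : ℕ) < l) (fun r s => Trs k n a r s) r s hrs.le,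
        coeff_upper k (fun s => (s : ℕ) < l) (fun r s => Trs k n a r s) s s le_rfl,
        coeff_upper k (fun s => l ≤ (s : ℕ))
          (fun r s => Trs k n a r s + a r s ⟨0, hn s⟩ * (1 + Tq k n a s)) r s hrs.le,
        coeff_upper k (fun s => l ≤ (s : ℕ))
          (fun r s => Trs k n a r s + a r s ⟨0, hn s⟩ * (1 + Tq k n a s)) s s le_rfl] at h
      simpa [hs, hrs, hrs.ne, not_lt.mpr hs] using h
  · rintro ⟨H1, H2, H3⟩
    refine Ideal.add_mem _ (Ideal.add_mem _ ?_ ?_) ?_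
    · refine Ideal.sum_mem _ fun s hs => ?_
      rw [H1 s (Finset.mem_filter.mp hs).2, CharTwo.add_self_eq_zero, C_0, zero_mul]
      exact Ideal.zero_mem _
    · refine Ideal.sum_mem _ fun r _ => Ideal.sum_mem _ fun s hs => ?_
      have h := (Finset.mem_filter.mp hs).2
      rw [H2 r s h.1 h.2, C_0, zero_mul]
      exact Ideal.zero_mem _
    · refine Ideal.sum_mem _ fun r _ => Ideal.sum_mem _ fun s hs => ?_
      have h := (Finset.mem_filter.mp hs).2
      rw [H3 r s h.1 h.2, C_0, zero_mul]
      exact Ideal.zero_mem _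
end

section
/- Suppose A is in unipotent upper triangular form, n_1, …, n_l ≥ 2 and n_{l+1} = ⋯ = n_k = 1. Then the images in the quotient ring R/I of the monomials x_{s,0}² for 1 ≤ s ≤ l, together with the monomials x_{r,0} x_{s,0} for 1 ≤ r < s ≤ k, form a basis over 𝔽₂ of the image in R/I of the 𝔽₂-subspace of R consisting of homogeneous polynomials of degree 2. -/
open MvPolynomial

theorem aux_coeff_XX {k : ℕ} (r s u v : Fin k) :
    coeff (Finsupp.single r 1 + Finsupp.single s 1) (X u * X v : MvPolynomial (Fin k) (ZMod 2)) =
      if (u = r ∧ v = s) ∨ (u = s ∧ v = r) then 1 else 0 := by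
  classical
  have : (X u * X v : MvPolynomial (Fin k) (ZMod 2)) =
      monomial (Finsupp.single u 1 + Finsupp.single v 1) 1 := by
    simp [X, monomial_mul]
  rw [this, coeff_monomial]
  congr 1
  rw [Finsupp.single_add_single_eq_single_add_single one_ne_zero one_ne_zero]
  simp

theorem aux_coeff_mul {σ : Type*} (g q : MvPolynomial σ (ZMod 2))
    (hq : ∀ d : σ →₀ ℕ, d.degree < 2 → coeff d q = 0) (d : σ →₀ ℕ) (hd : d.degree ≤ 2) :
    coeff d (g * q) = coeff 0 g * coeff d q := by
  classical
  rw [coeff_mul, Finset.sum_eq_single (0, d)]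
  · rintro ⟨x, y⟩ hxy hne
    rw [Finset.HasAntidiagonal.mem_antidiagonal] at hxy
    simp only at hxy ⊢
    rw [hq y, mul_zero]
    have hx : x.degree ≠ 0 := by
      intro h
      rw [Finsupp.degree_eq_zero_iff] at h
      subst h
      simp at hxy
      exact hne (by rw [hxy])
    have := congrArg Finsupp.degree hxy
    rw [map_add] at this
    omega
  · simp

/-- the substitution -/
noncomputable def auxPhi (k : ℕ) (n : Fin k → ℕ) (a : Fin k → (i : Fin k) → Fin (n i) → ZMod 2) :
    MvPolynomial (Σ i : Fin k, Fin (n i + 1)) (ZMod 2) →ₐ[ZMod 2] MvPolynomial (Fin k) (ZMod 2) :=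
  aeval (fun v => Fin.cases (motive := fun _ => MvPolynomial (Fin k) (ZMod 2)) (X v.1)
    (fun m => ∑ j ∈ Finset.univ.filter (fun j : Fin k => j ≤ v.1), C (a j v.1 m) * X j) v.2)

theorem auxPhi_zero (k : ℕ) (n : Fin k → ℕ) (a : Fin k → (i : Fin k) → Fin (n i) → ZMod 2)
    (i : Fin k) : auxPhi k n a (X ⟨i, 0⟩) = X i := by
  simp [auxPhi]

theorem auxPhi_succ (k : ℕ) (n : Fin k → ℕ) (a : Fin k → (i : Fin k) → Fin (n i) → ZMod 2)
    (i : Fin k) (m : Fin (n i)) : auxPhi k n a (X ⟨i, m.succ⟩) =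
      ∑ j ∈ Finset.univ.filter (fun j : Fin k => j ≤ i), C (a j i m) * X j := by
  simp [auxPhi]

theorem auxPhi_prod_hom (k : ℕ) (n : Fin k → ℕ) (a : Fin k → (i : Fin k) → Fin (n i) → ZMod 2)
    (i : Fin k) :
    (auxPhi k n a (∏ m : Fin (n i + 1), X ⟨i, m⟩)).IsHomogeneous (n i + 1) := by
  rw [map_prod]
  have := IsHomogeneous.prod Finset.univ
    (fun m : Fin (n i + 1) => auxPhi k n a (X ⟨i, m⟩)) (fun _ => 1) (by
      intro m _
      refine Fin.cases ?_ (fun m => ?_) m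
      · rw [auxPhi_zero]; exact isHomogeneous_X _ _
      · rw [auxPhi_succ]
        exact IsHomogeneous.sum _ _ _ (fun j _ => isHomogeneous_C_mul_X _ _))
  simpa using this

theorem aux_kill (k l : ℕ) (n : Fin k → ℕ) (hn : ∀ i, 1 ≤ n i)
    (a : Fin k → (i : Fin k) → Fin (n i) → ZMod 2)
    (hdiag : ∀ i : Fin k, ∀ m : Fin (n i), a i i m = 1)
    (h2 : ∀ i : Fin k, (i : ℕ) < l → 2 ≤ n i)
    (h1 : ∀ i : Fin k, l ≤ (i : ℕ) → n i = 1)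
    (r s : Fin k) (hrs : r ≤ s) (c : ZMod 2) (hc0 : (s : ℕ) < l → c = 0)
    (hc1 : l ≤ (s : ℕ) → r < s ∧ ∀ m, c = a r s m)
    (f : MvPolynomial (Σ i : Fin k, Fin (n i + 1)) (ZMod 2)) (hf : f ∈ bottIdeal k n a) :
    (∀ d : Fin k →₀ ℕ, d.degree < 2 → coeff d (auxPhi k n a f) = 0) ∧
    coeff (Finsupp.single r 1 + Finsupp.single s 1) (auxPhi k n a f) =
      c * coeff (Finsupp.single s 1 + Finsupp.single s 1) (auxPhi k n a f) := by
  unfold bottIdeal at hf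
  induction hf using Submodule.span_induction with
  | zero => simp
  | add x y _ _ hx hy =>
    refine ⟨fun d hd => ?_, ?_⟩
    · rw [map_add, coeff_add, hx.1 d hd, hy.1 d hd, add_zero]
    · rw [map_add, coeff_add, coeff_add, hx.2, hy.2, mul_add]
  | smul g x _ hx =>
    rw [smul_eq_mul, map_mul]
    refine ⟨fun d hd => ?_, ?_⟩
    · rw [aux_coeff_mul _ _ hx.1 _ hd.le, hx.1 d hd, mul_zero]
    · rw [aux_coeff_mul _ _ hx.1 _ (by simp), aux_coeff_mul _ _ hx.1 _ (by simp), hx.2]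
      ring
  | mem x hx =>
    rcases hx with ⟨i, rfl⟩ | ⟨i, m, rfl⟩
    · have hh := auxPhi_prod_hom k n a i
      refine ⟨fun d hd => hh.coeff_eq_zero (by have := hn i; omega), ?_⟩
      by_cases hi : (i : ℕ) < l
      · have := h2 i hi
        rw [hh.coeff_eq_zero (by simp; omega), hh.coeff_eq_zero (by simp; omega), mul_zero]
      · have hni := h1 i (by omega)
        have hsub : Subsingleton (Fin (n i)) := by rw [hni]; infer_instance
        let m0 : Fin (n i) := ⟨0, by omega⟩
        rw [Fin.prod_univ_succ, Fintype.prod_subsingleton _ m0, map_mul, auxPhi_zero, auxPhi_succ,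
          Finset.mul_sum, coeff_sum, coeff_sum]
        simp_rw [mul_left_comm (X i) (C _) (X _), coeff_C_mul, aux_coeff_XX]
        by_cases hsi : i = s
        · subst hsi
          obtain ⟨hlt, hc⟩ := hc1 (by omega)
          rw [Finset.sum_eq_single r, Finset.sum_eq_single i]
          · simp [hdiag, hc m0]
          · intro b _ hb; simp [hb]
          · simp
          · intro b _ hb; simp [hb, hlt.ne']
          · simp [hrs]
        · rw [Finset.sum_eq_zero, Finset.sum_eq_zero, mul_zero]
          · intro b _; simp [hsi]
          · intro b hb
            simp only [Finset.mem_filter, Finset.mem_univ, true_and] at hb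
            rw [if_neg, mul_zero]
            rintro (⟨rfl, rfl⟩ | ⟨h, _⟩)
            · exact hsi (le_antisymm hrs hb)
            · exact hsi h
    · have : auxPhi k n a (X ⟨i, m.succ⟩ +
          ∑ j ∈ Finset.univ.filter (fun j : Fin k => j ≤ i), C (a j i m) * X ⟨j, 0⟩) = 0 := by
        rw [map_add, auxPhi_succ, map_sum]
        simp_rw [map_mul, auxPhi_zero, algHom_C, algebraMap_eq]
        exact CharTwo.add_self_eq_zero _
      rw [this]; simp

theorem aux_span (k l : ℕ) (n : Fin k → ℕ)
    (a : Fin k → (i : Fin k) → Fin (n i) → ZMod 2)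
    (hdiag : ∀ i : Fin k, ∀ m : Fin (n i), a i i m = 1)
    (h1 : ∀ i : Fin k, l ≤ (i : ℕ) → n i = 1)
    (W : Submodule (ZMod 2) (MvPolynomial (Σ i : Fin k, Fin (n i + 1)) (ZMod 2) ⧸ bottIdeal k n a))
    (hW1 : ∀ s : Fin k, (s : ℕ) < l → Ideal.Quotient.mk (bottIdeal k n a)
            (X (⟨s, 0⟩ : Σ i : Fin k, Fin (n i + 1)) ^ 2) ∈ W)
    (hW2 : ∀ r s : Fin k, r < s → Ideal.Quotient.mk (bottIdeal k n a)
            (X (⟨r, 0⟩ : Σ i : Fin k, Fin (n i + 1))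
              * X (⟨s, 0⟩ : Σ i : Fin k, Fin (n i + 1))) ∈ W) :
    Submodule.map (Ideal.Quotient.mkₐ (ZMod 2) (bottIdeal k n a)).toLinearMap
          (MvPolynomial.homogeneousSubmodule (Σ i : Fin k, Fin (n i + 1)) (ZMod 2) 2) ≤ W := by
  have hlin : ∀ (i : Fin k) (m : Fin (n i)),
      Ideal.Quotient.mkₐ (ZMod 2) (bottIdeal k n a) (X ⟨i, m.succ⟩) =
      ∑ j ∈ Finset.univ.filter (fun j : Fin k => j ≤ i),
        a j i m • Ideal.Quotient.mkₐ (ZMod 2) (bottIdeal k n a) (X ⟨j, 0⟩) := by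
    intro i m
    have h : Ideal.Quotient.mkₐ (ZMod 2) (bottIdeal k n a) (X ⟨i, m.succ⟩ +
          ∑ j ∈ Finset.univ.filter (fun j : Fin k => j ≤ i), C (a j i m) * X ⟨j, 0⟩) = 0 := by
      rw [Ideal.Quotient.mkₐ_eq_mk, Ideal.Quotient.eq_zero_iff_mem]
      exact Ideal.subset_span (Or.inr ⟨i, m, rfl⟩)
    rw [map_add, map_sum] at h
    simp_rw [← smul_eq_C_mul, map_smul] at h
    rw [eq_neg_of_add_eq_zero_left h, neg_eq_of_add_eq_zero_left]
    rw [← two_smul (ZMod 2), show (2 : ZMod 2) = 0 from rfl, zero_smul]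
  have hoff : ∀ r s : Fin k, r ≠ s → Ideal.Quotient.mkₐ (ZMod 2) (bottIdeal k n a) (X ⟨r, 0⟩)
      * Ideal.Quotient.mkₐ (ZMod 2) (bottIdeal k n a) (X ⟨s, 0⟩) ∈ W := by
    intro r s h
    rcases lt_or_gt_of_ne h with h | h
    · rw [← map_mul]; exact hW2 r s h
    · rw [mul_comm, ← map_mul]; exact hW2 s r h
  have hall : ∀ r s : Fin k, Ideal.Quotient.mkₐ (ZMod 2) (bottIdeal k n a) (X ⟨r, 0⟩)
      * Ideal.Quotient.mkₐ (ZMod 2) (bottIdeal k n a) (X ⟨s, 0⟩) ∈ W := by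
    intro r s
    by_cases h : r = s
    · subst h
      by_cases hr : (r : ℕ) < l
      · rw [← map_mul, ← pow_two]; exact hW1 r hr
      · have hni := h1 r (by omega)
        have hsub : Subsingleton (Fin (n r)) := by rw [hni]; infer_instance
        let m0 : Fin (n r) := ⟨0, by omega⟩
        have h0 : Ideal.Quotient.mkₐ (ZMod 2) (bottIdeal k n a)
            (∏ m : Fin (n r + 1), X ⟨r, m⟩) = 0 := by
          rw [Ideal.Quotient.mkₐ_eq_mk, Ideal.Quotient.eq_zero_iff_mem]
          exact Ideal.subset_span (Or.inl ⟨r, rfl⟩)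
        rw [Fin.prod_univ_succ, Fintype.prod_subsingleton _ m0, map_mul, hlin,
          ← Finset.add_sum_erase _ _ (a := r) (by simp), hdiag, one_smul, mul_add,
          Finset.mul_sum] at h0
        rw [eq_neg_of_add_eq_zero_left h0]
        refine W.neg_mem (W.sum_mem fun j hj => ?_)
        rw [mul_smul_comm]
        exact W.smul_mem _ (hoff _ _ (Finset.ne_of_mem_erase hj).symm)
    · exact hoff r s h
  have hU : ∀ v, Ideal.Quotient.mkₐ (ZMod 2) (bottIdeal k n a) (X v) ∈
      Submodule.span (ZMod 2) (Set.range fun j : Fin k =>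
        Ideal.Quotient.mkₐ (ZMod 2) (bottIdeal k n a) (X ⟨j, 0⟩)) := by
    rintro ⟨i, m⟩
    refine Fin.cases ?_ (fun m => ?_) m
    · exact Submodule.subset_span ⟨i, rfl⟩
    · rw [hlin]
      exact Submodule.sum_mem _ fun j _ => Submodule.smul_mem _ _ (Submodule.subset_span ⟨j, rfl⟩)
  rw [← homogeneousSubmodule_one_pow, pow_two, Submodule.map_mul]
  have hle : Submodule.map (Ideal.Quotient.mkₐ (ZMod 2) (bottIdeal k n a)).toLinearMap
      (homogeneousSubmodule (Σ i : Fin k, Fin (n i + 1)) (ZMod 2) 1) ≤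
      Submodule.span (ZMod 2) (Set.range fun j : Fin k =>
        Ideal.Quotient.mkₐ (ZMod 2) (bottIdeal k n a) (X ⟨j, 0⟩)) := by
    rw [homogeneousSubmodule_one_eq_span_X, Submodule.map_span, Submodule.span_le]
    rintro _ ⟨_, ⟨v, rfl⟩, rfl⟩
    exact hU v
  refine (mul_le_mul' hle hle).trans ?_
  rw [Submodule.span_mul_span, Submodule.span_le]
  rintro _ ⟨_, ⟨r, rfl⟩, _, ⟨s, rfl⟩, rfl⟩
  exact hall r s

/-- Suppose `A` is in unipotent upper triangular form, `n_1, …, n_l ≥ 2` and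
`n_{l+1} = ⋯ = n_k = 1`.  Then the images in `R/I` of the monomials `x_{s,0}²` for `s ≤ l` and
`x_{r,0} x_{s,0}` for `r < s` form an `𝔽₂`-basis of the image in `R/I` of the subspace of `R` of
homogeneous polynomials of degree `2`. -/
theorem stmt_17 (k l : ℕ) (hk : 1 ≤ k) (hl : l ≤ k) (n : Fin k → ℕ) (hn : ∀ i, 1 ≤ n i)
    (a : Fin k → (i : Fin k) → Fin (n i) → ZMod 2)
    (hUT : ∀ j i : Fin k, i < j → ∀ m : Fin (n i), a j i m = 0)
    (hdiag : ∀ i : Fin k, ∀ m : Fin (n i), a i i m = 1)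
    (h2 : ∀ i : Fin k, (i : ℕ) < l → 2 ≤ n i)
    (h1 : ∀ i : Fin k, l ≤ (i : ℕ) → n i = 1) :
    LinearIndependent (ZMod 2)
      (Sum.elim
        (fun s : {s : Fin k // (s : ℕ) < l} =>
          Ideal.Quotient.mk (bottIdeal k n a)
            (X (⟨s.1, 0⟩ : Σ i : Fin k, Fin (n i + 1)) ^ 2))
        (fun p : {p : Fin k × Fin k // p.1 < p.2} =>
          Ideal.Quotient.mk (bottIdeal k n a)
            (X (⟨p.1.1, 0⟩ : Σ i : Fin k, Fin (n i + 1))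
              * X (⟨p.1.2, 0⟩ : Σ i : Fin k, Fin (n i + 1))))) ∧
    Submodule.span (ZMod 2)
      (Set.range
        (Sum.elim
          (fun s : {s : Fin k // (s : ℕ) < l} =>
            Ideal.Quotient.mk (bottIdeal k n a)
              (X (⟨s.1, 0⟩ : Σ i : Fin k, Fin (n i + 1)) ^ 2))
          (fun p : {p : Fin k × Fin k // p.1 < p.2} =>
            Ideal.Quotient.mk (bottIdeal k n a)
              (X (⟨p.1.1, 0⟩ : Σ i : Fin k, Fin (n i + 1))
                * X (⟨p.1.2, 0⟩ : Σ i : Fin k, Fin (n i + 1))))))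
      = Submodule.map (Ideal.Quotient.mkₐ (ZMod 2) (bottIdeal k n a)).toLinearMap
          (MvPolynomial.homogeneousSubmodule (Σ i : Fin k, Fin (n i + 1)) (ZMod 2) 2) := by
  classical
  refine ⟨?_, le_antisymm ?_ ?_⟩
  · set b : {s : Fin k // (s : ℕ) < l} ⊕ {p : Fin k × Fin k // p.1 < p.2} →
        MvPolynomial (Σ i : Fin k, Fin (n i + 1)) (ZMod 2) :=
      Sum.elim (fun s => X (⟨s.1, 0⟩ : Σ i : Fin k, Fin (n i + 1)) ^ 2)
        (fun p => X (⟨p.1.1, 0⟩ : Σ i : Fin k, Fin (n i + 1))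
              * X (⟨p.1.2, 0⟩ : Σ i : Fin k, Fin (n i + 1))) with hb
    rw [Fintype.linearIndependent_iff]
    intro g hg
    have hmem : ∑ i, g i • b i ∈ bottIdeal k n a := by
      rw [← Ideal.Quotient.eq_zero_iff_mem, ← Ideal.Quotient.mkₐ_eq_mk (ZMod 2), map_sum, ← hg]
      refine Finset.sum_congr rfl fun i _ => ?_
      rw [map_smul]
      rcases i with i | i <;> rfl
    have hphi : auxPhi k n a (∑ i, g i • b i) =
        ∑ s : {s : Fin k // (s : ℕ) < l}, g (Sum.inl s) • (X s.1 * X s.1) +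
        ∑ p : {p : Fin k × Fin k // p.1 < p.2}, g (Sum.inr p) • (X p.1.1 * X p.1.2) := by
      rw [Fintype.sum_sum_type, map_add, map_sum, map_sum]
      simp only [hb, Sum.elim_inl, Sum.elim_inr, map_smul, map_mul, pow_two, auxPhi_zero]
    have hss : ∀ s : Fin k, coeff (Finsupp.single s 1 + Finsupp.single s 1)
        (auxPhi k n a (∑ i, g i • b i)) =
          if h : (s : ℕ) < l then g (Sum.inl ⟨s, h⟩) else 0 := by
      intro s
      rw [hphi, coeff_add, coeff_sum, coeff_sum]
      simp_rw [coeff_smul, aux_coeff_XX]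
      rw [Finset.sum_eq_zero (s := (Finset.univ : Finset {p : Fin k × Fin k // p.1 < p.2})),
        add_zero]
      · split_ifs with h
        · rw [Finset.sum_eq_single ⟨s, h⟩]
          · simp
          · intro t _ ht
            have : t.1 ≠ s := fun h => ht (Subtype.ext h)
            simp [this]
          · simp
        · refine Finset.sum_eq_zero fun t _ => ?_
          have : t.1 ≠ s := by rintro rfl; exact h t.2
          simp [this]
      · intro p _
        have := p.2.ne
        rw [if_neg, smul_zero]
        grind
    have hrs : ∀ p : {p : Fin k × Fin k // p.1 < p.2},
        coeff (Finsupp.single p.1.1 1 + Finsupp.single p.1.2 1)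
        (auxPhi k n a (∑ i, g i • b i)) = g (Sum.inr p) := by
      intro p
      have hp := p.2
      rw [hphi, coeff_add, coeff_sum, coeff_sum]
      simp_rw [coeff_smul, aux_coeff_XX]
      rw [Finset.sum_eq_zero, zero_add, Finset.sum_eq_single p]
      · simp
      · intro q _ hq
        have hq2 := q.2
        have : ¬ (q.1.1 = p.1.1 ∧ q.1.2 = p.1.2) := fun h => hq (Subtype.ext (Prod.ext h.1 h.2))
        rw [if_neg, smul_zero]
        rintro (h | ⟨h, h'⟩)
        · exact this h
        · rw [h, h'] at hq2
          exact absurd hp hq2.not_gt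
      · simp
      · intro t _
        rw [if_neg, smul_zero]
        rintro (⟨h, h'⟩ | ⟨h, h'⟩)
        · exact hp.ne (h.symm.trans h')
        · exact hp.ne (h'.symm.trans h)
    have hinl : ∀ s, g (Sum.inl s) = 0 := by
      intro s
      have := (aux_kill k l n hn a hdiag h2 h1 s.1 s.1 le_rfl 0 (fun _ => rfl)
        (fun h => absurd s.2 (by omega)) _ hmem).2
      rw [hss, zero_mul, dif_pos s.2] at this
      exact this
    have hss0 : ∀ s : Fin k, coeff (Finsupp.single s 1 + Finsupp.single s 1)
        (auxPhi k n a (∑ i, g i • b i)) = 0 := by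
      intro s
      rw [hss]
      split_ifs
      · exact hinl _
      · rfl
    rintro (s | p)
    · exact hinl s
    · have key : ∃ c : ZMod 2, ((p.1.2 : ℕ) < l → c = 0) ∧
          (l ≤ (p.1.2 : ℕ) → p.1.1 < p.1.2 ∧ ∀ m, c = a p.1.1 p.1.2 m) := by
        by_cases h : (p.1.2 : ℕ) < l
        · exact ⟨0, fun _ => rfl, fun h' => absurd h (by omega)⟩
        · have hni := h1 p.1.2 (by omega)
          have hsub : Subsingleton (Fin (n p.1.2)) := by rw [hni]; infer_instance
          exact ⟨a p.1.1 p.1.2 ⟨0, by omega⟩, fun h' => absurd h' h,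
            fun _ => ⟨p.2, fun m => by rw [Subsingleton.elim m]⟩⟩
      obtain ⟨c, hc0, hc1⟩ := key
      have := (aux_kill k l n hn a hdiag h2 h1 p.1.1 p.1.2 p.2.le c hc0 hc1 _ hmem).2
      rw [hrs, hss0, mul_zero] at this
      exact this
  · rw [Submodule.span_le]
    rintro _ ⟨s | p, rfl⟩
    · exact ⟨_, (isHomogeneous_X_pow _ 2), rfl⟩
    · exact ⟨_, (isHomogeneous_X _ _).mul (isHomogeneous_X _ _), rfl⟩
  · refine aux_span k l n a hdiag h1 _ ?_ ?_
    · intro s hs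
      exact Submodule.subset_span ⟨Sum.inl ⟨s, hs⟩, rfl⟩
    · intro r s hrs
      exact Submodule.subset_span ⟨Sum.inr ⟨(r, s), hrs⟩, rfl⟩
end

section
/- Suppose A is in unipotent upper triangular form. Then for every integer d ≥ 0, the dimension over 𝔽₂ of the image in the quotient ring R/I of the 𝔽₂-subspace of R consisting of homogeneous polynomials of degree d equals the coefficient of t^d in the polynomial ∏_{i=1}^{k} (1 + t + t² + ⋯ + t^{n_i}). -/
open MvPolynomial

/-- The tower of algebras: generators `y`, the monomial basis, the relations and the
universal property. -/
theorem bott_tower (k : ℕ) : ∀ (n : Fin k → ℕ)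
    (a : Fin k → (i : Fin k) → Fin (n i) → ZMod 2)
    (_hUT : ∀ j i : Fin k, i < j → ∀ m : Fin (n i), a j i m = 0)
    (_hdiag : ∀ i : Fin k, ∀ m : Fin (n i), a i i m = 1),
    ∃ (S : Type) (_ : CommRing S) (_ : Algebra (ZMod 2) S) (y : Fin k → S)
      (b : Module.Basis ((i : Fin k) → Fin (n i + 1)) (ZMod 2) S),
      (∀ e, b e = ∏ i, y i ^ (e i : ℕ)) ∧
      (∀ i, y i * ∏ m : Fin (n i), ∑ j, a j i m • y j = 0) ∧
      (∀ (T : Type) [CommRing T] [Algebra (ZMod 2) T] (z : Fin k → T),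
        (∀ i, z i * ∏ m : Fin (n i), ∑ j, a j i m • z j = 0) →
        ∃ f : S →ₐ[ZMod 2] T, ∀ i, f (y i) = z i) := by
  induction k with
  | zero =>
    intro n a _ _
    refine ⟨ZMod 2, inferInstance, inferInstance, fun i => i.elim0,
      Module.Basis.singleton _ _, fun e => by simp, fun i => i.elim0, ?_⟩
    intro T _ _ z _
    exact ⟨Algebra.ofId _ _, fun i => i.elim0⟩
  | succ k ih =>
    intro n a hUT hdiag
    obtain ⟨S, _, _, y, b, hb, hrel, huniv⟩ := ih (fun i => n i.castSucc)
      (fun j i m => a j.castSucc i.castSucc m)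
      (fun j i h m => hUT _ _ (by simpa using h) m) (fun i m => hdiag _ m)
    have hS : Nontrivial S := ⟨⟨b 0, 0, b.ne_zero 0⟩⟩
    let L : Fin (n (Fin.last k)) → S := fun m => ∑ j : Fin k, a j.castSucc (Fin.last k) m • y j
    let g : Polynomial S := Polynomial.X * ∏ m, (Polynomial.X + Polynomial.C (L m))
    have hprod : (∏ m, (Polynomial.X + Polynomial.C (L m))).Monic :=
      Polynomial.monic_prod_of_monic _ _ fun m _ => Polynomial.monic_X_add_C _
    have hg : g.Monic := Polynomial.monic_X.mul hprod
    have hdeg : g.natDegree = n (Fin.last k) + 1 := by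
      rw [Polynomial.Monic.natDegree_mul Polynomial.monic_X hprod,
        Polynomial.natDegree_prod_of_monic _ _ fun m _ => Polynomial.monic_X_add_C _]
      simp [add_comm]
    let c := (AdjoinRoot.powerBasis' hg).basis.reindex (finCongr hdeg)
    have hc : ∀ i, c i = AdjoinRoot.root g ^ (i : ℕ) := by
      intro i
      simp only [c, Module.Basis.reindex_apply, PowerBasis.basis_eq_pow]
      rfl
    -- values of the linear forms of the old blocks and the last one, for a general tuple
    have hlin : ∀ (T : Type) [CommRing T] [Algebra (ZMod 2) T] (z : Fin (k + 1) → T)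
        (i : Fin k) (m), ∑ j, a j i.castSucc m • z j
          = ∑ j : Fin k, a j.castSucc i.castSucc m • z j.castSucc := by
      intro T _ _ z i m
      rw [Fin.sum_univ_castSucc, hUT _ _ (Fin.castSucc_lt_last i), zero_smul, add_zero]
    have hlast : ∀ (T : Type) [CommRing T] [Algebra (ZMod 2) T] (z : Fin (k + 1) → T)
        (m), ∑ j, a j (Fin.last k) m • z j
          = z (Fin.last k) + ∑ j : Fin k, a j.castSucc (Fin.last k) m • z j.castSucc := by
      intro T _ _ z m
      rw [Fin.sum_univ_castSucc, hdiag, one_smul, add_comm]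
    let ofA : S →ₐ[ZMod 2] AdjoinRoot g := IsScalarTower.toAlgHom (ZMod 2) S (AdjoinRoot g)
    refine ⟨AdjoinRoot g, inferInstance, inferInstance,
      Fin.snoc (α := fun _ => AdjoinRoot g) (fun i => ofA (y i)) (AdjoinRoot.root g),
      (b.smulTower c).reindex ((Equiv.prodComm _ _).trans
        (Fin.snocEquiv (fun i => Fin (n i + 1)))), ?_, ?_, ?_⟩
    · intro e
      rw [Fin.prod_univ_castSucc, Module.Basis.reindex_apply, Module.Basis.smulTower_apply, hb, hc,
        Algebra.smul_def, map_prod]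
      simp [Fin.snocEquiv, ofA, Fin.init]
    · intro i
      refine Fin.lastCases ?_ (fun i => ?_) i
      · have h0 : Polynomial.eval₂ (AdjoinRoot.of g) (AdjoinRoot.root g) g = 0 :=
          AdjoinRoot.eval₂_root g
        have hh : ∀ m, AdjoinRoot.of g (L m) = ∑ j : Fin k,
            a j.castSucc (Fin.last k) m • ofA (y j) := by
          intro m
          change ofA (L m) = _
          simp [L]
        simp only [hlast, Fin.snoc_last, Fin.snoc_castSucc, ← hh]
        have h1 : Polynomial.eval₂ (AdjoinRoot.of g) (AdjoinRoot.root g)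
            (Polynomial.X * ∏ m, (Polynomial.X + Polynomial.C (L m))) = 0 := h0
        rw [Polynomial.eval₂_mul, Polynomial.eval₂_finsetProd] at h1
        simpa using h1
      · simp only [hlin, Fin.snoc_castSucc]
        have := congrArg ofA (hrel i)
        simpa using this
    · intro T _ _ z hz
      obtain ⟨f, hf⟩ := huniv T (fun i => z i.castSucc) (fun i => by
        have := hz i.castSucc
        simpa only [hlin] using this)
      have h0 : Polynomial.eval₂ (f : S →+* T) (z (Fin.last k)) g = 0 := by
        have := hz (Fin.last k)
        simp only [hlast] at this
        simp only [g]
        rw [Polynomial.eval₂_mul, Polynomial.eval₂_finsetProd]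
        have hfL : ∀ m, f (L m) = ∑ j : Fin k, a j.castSucc (Fin.last k) m • z j.castSucc := by
          intro m
          simp only [L, map_sum, map_smul, hf]
        simp only [Polynomial.eval₂_X, Polynomial.eval₂_add, Polynomial.eval₂_C, RingHom.coe_coe,
          hfL]
        exact this
      refine ⟨AdjoinRoot.liftAlgHom g f (z (Fin.last k)) h0, fun i => ?_⟩
      refine Fin.lastCases ?_ (fun i => ?_) i
      · simp
      · rw [Fin.snoc_castSucc]
        change AdjoinRoot.liftAlgHom g f (z (Fin.last k)) h0 (AdjoinRoot.of g (y i)) = _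
        rw [AdjoinRoot.liftAlgHom_of, hf]

/-- The ideal is closed under taking homogeneous components. -/
theorem bott_homogeneous (k : ℕ) (n : Fin k → ℕ)
    (a : Fin k → (i : Fin k) → Fin (n i) → ZMod 2) (d : ℕ)
    (p : MvPolynomial (Σ i : Fin k, Fin (n i + 1)) (ZMod 2)) (hp : p ∈ bottIdeal k n a) :
    homogeneousComponent d p ∈ bottIdeal k n a := by
  letI := MvPolynomial.gradedAlgebra (σ := Σ i : Fin k, Fin (n i + 1)) (R := ZMod 2)
  have h : (bottIdeal k n a).IsHomogeneous
      (homogeneousSubmodule (Σ i : Fin k, Fin (n i + 1)) (ZMod 2)) := by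
    apply Ideal.homogeneous_span
    rintro x (⟨i, rfl⟩ | ⟨i, m, rfl⟩)
    · exact ⟨_, IsHomogeneous.prod _ _ (fun _ => 1) fun m _ => isHomogeneous_X _ _⟩
    · refine ⟨1, (isHomogeneous_X _ _).add (IsHomogeneous.sum _ _ _ fun j _ => ?_)⟩
      simpa using (isHomogeneous_C _ (a j i m)).mul (isHomogeneous_X (ZMod 2) _)
  have := h d hp
  rwa [← decomposition.decompose'_apply]

theorem bott_coeff (k : ℕ) (n : Fin k → ℕ) (d : ℕ) :
    (∏ i : Fin k, ∑ e ∈ Finset.range (n i + 1), (Polynomial.X : Polynomial ℕ) ^ e).coeff d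
      = Fintype.card {e : (i : Fin k) → Fin (n i + 1) // ∑ i, (e i : ℕ) = d} := by
  simp only [Finset.sum_range]
  rw [Finset.prod_univ_sum, Polynomial.finsetSum_coeff]
  simp only [Finset.prod_pow_eq_pow_sum, Polynomial.coeff_X_pow, Fintype.piFinset_univ]
  rw [Fintype.card_subtype, Finset.card_filter]
  exact Finset.sum_congr rfl fun e _ => by simp [eq_comm]

/-- Suppose `A` is in unipotent upper triangular form.  Then for every `d ≥ 0`,
the `𝔽₂`-dimension of the image in `R/I` of the subspace of homogeneous polynomials of degree `d`
in `R` equals the coefficient of `t^d` in `∏_{i=1}^{k} (1 + t + t² + ⋯ + t^{n_i})`. -/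
theorem stmt_18 (k : ℕ) (hk : 1 ≤ k) (n : Fin k → ℕ) (hn : ∀ i, 1 ≤ n i)
    (a : Fin k → (i : Fin k) → Fin (n i) → ZMod 2)
    (hUT : ∀ j i : Fin k, i < j → ∀ m : Fin (n i), a j i m = 0)
    (hdiag : ∀ i : Fin k, ∀ m : Fin (n i), a i i m = 1) :
    ∀ d : ℕ,
      Module.finrank (ZMod 2)
        ↥(Submodule.map (Ideal.Quotient.mkₐ (ZMod 2) (bottIdeal k n a)).toLinearMap
            (MvPolynomial.homogeneousSubmodule (Σ i : Fin k, Fin (n i + 1)) (ZMod 2) d))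
      = (∏ i : Fin k, ∑ e ∈ Finset.range (n i + 1), (Polynomial.X : Polynomial ℕ) ^ e).coeff d := by
  intro d
  obtain ⟨S, _, _, y, b, hb, hrel, huniv⟩ := bott_tower k n a hUT hdiag
  set I := bottIdeal k n a with hI
  have hsum : ∀ (T : Type) [CommRing T] [Algebra (ZMod 2) T] (z : Fin k → T) (i : Fin k) (m),
      ∑ j ∈ Finset.univ.filter (fun j : Fin k => j ≤ i), a j i m • z j = ∑ j, a j i m • z j := by
    intro T _ _ z i m
    apply Finset.sum_subset (Finset.filter_subset _ _)
    intro j _ hj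
    rw [hUT j i (by simpa using hj), zero_smul]
  let z : Fin k → MvPolynomial (Σ i : Fin k, Fin (n i + 1)) (ZMod 2) ⧸ I :=
    fun i => Ideal.Quotient.mkₐ (ZMod 2) I (X ⟨i, 0⟩)
  have hneg : ∀ (T : Type) [CommRing T] [Algebra (ZMod 2) T] (x : T), x + x = 0 := by
    intro T _ _ x
    rw [← two_smul (ZMod 2) x, show (2 : ZMod 2) = 0 from rfl, zero_smul]
  have hx : ∀ (i : Fin k) (m : Fin (n i)),
      Ideal.Quotient.mkₐ (ZMod 2) I (X ⟨i, m.succ⟩) = ∑ j, a j i m • z j := by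
    intro i m
    have h1 : Ideal.Quotient.mkₐ (ZMod 2) I (X ⟨i, m.succ⟩ +
        ∑ j ∈ Finset.univ.filter (fun j : Fin k => j ≤ i), C (a j i m) * X ⟨j, 0⟩) = 0 := by
      rw [Ideal.Quotient.mkₐ_eq_mk, Ideal.Quotient.eq_zero_iff_mem]
      exact Ideal.subset_span (Or.inr ⟨i, m, rfl⟩)
    simp only [← smul_eq_C_mul, map_add, map_sum, map_smul] at h1
    have h2 := hsum _ z i m
    rw [← h2]
    have h3 := hneg _ (∑ j ∈ Finset.univ.filter (fun j : Fin k => j ≤ i), a j i m • z j)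
    exact add_right_cancel (h1.trans h3.symm)
  have hz : ∀ i, z i * ∏ m : Fin (n i), ∑ j, a j i m • z j = 0 := by
    intro i
    have h1 : Ideal.Quotient.mkₐ (ZMod 2) I (∏ m : Fin (n i + 1), X ⟨i, m⟩) = 0 := by
      rw [Ideal.Quotient.mkₐ_eq_mk, Ideal.Quotient.eq_zero_iff_mem]
      exact Ideal.subset_span (Or.inl ⟨i, rfl⟩)
    rw [Fin.prod_univ_succ, map_mul, map_prod] at h1
    simpa only [hx] using h1
  obtain ⟨ψ, hψ⟩ := huniv _ z hz
  let φ₀ : MvPolynomial (Σ i : Fin k, Fin (n i + 1)) (ZMod 2) →ₐ[ZMod 2] S :=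
    aeval fun q => Fin.cases (motive := fun _ => S) (y q.1) (fun m => ∑ j, a j q.1 m • y j) q.2
  have hφ₀0 : ∀ i, φ₀ (X ⟨i, 0⟩) = y i := fun i => by simp [φ₀]
  have hφ₀s : ∀ i (m : Fin (n i)), φ₀ (X ⟨i, m.succ⟩) = ∑ j, a j i m • y j :=
    fun i m => by simp [φ₀]
  have hker : ∀ p ∈ I, φ₀ p = 0 := by
    have : I ≤ RingHom.ker φ₀ := by
      rw [hI, bottIdeal, Ideal.span_le]
      rintro p (⟨i, rfl⟩ | ⟨i, m, rfl⟩)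
      · rw [SetLike.mem_coe, RingHom.mem_ker, Fin.prod_univ_succ, map_mul, map_prod]
        simp only [hφ₀0, hφ₀s, hrel]
      · rw [SetLike.mem_coe, RingHom.mem_ker]
        simp only [← smul_eq_C_mul, map_add, map_sum, map_smul, hφ₀0, hφ₀s]
        rw [hsum S y i m]
        exact hneg _ _
    exact fun p hp => this hp
  let φ : (MvPolynomial (Σ i : Fin k, Fin (n i + 1)) (ZMod 2) ⧸ I) →ₐ[ZMod 2] S :=
    Ideal.Quotient.liftₐ I φ₀ hker
  have hφ : ∀ p, φ (Ideal.Quotient.mkₐ (ZMod 2) I p) = φ₀ p := fun p => rfl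
  -- `ψ ∘ φ = id`
  have hψφ : ∀ p, ψ (φ₀ p) = Ideal.Quotient.mkₐ (ZMod 2) I p := by
    have : ψ.comp φ₀ = Ideal.Quotient.mkₐ (ZMod 2) I := by
      apply MvPolynomial.algHom_ext
      rintro ⟨i, m⟩
      refine Fin.cases ?_ (fun m => ?_) m
      · rw [AlgHom.comp_apply, hφ₀0, hψ]
      · rw [AlgHom.comp_apply, hφ₀s, hx]
        simp [hψ]
    exact fun p => DFunLike.congr_fun this p
  let M : ((i : Fin k) → Fin (n i + 1)) →
      MvPolynomial (Σ i : Fin k, Fin (n i + 1)) (ZMod 2) := fun e => ∏ i, X ⟨i, 0⟩ ^ (e i : ℕ)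
  have hM : ∀ e, φ₀ (M e) = b e := fun e => by simp [M, hb, hφ₀0]
  have hMhom : ∀ e, (M e).IsHomogeneous (∑ i, (e i : ℕ)) := fun e =>
    IsHomogeneous.prod _ _ _ fun i _ => by
      simpa using (isHomogeneous_X (ZMod 2) (⟨i, 0⟩ : Σ i : Fin k, Fin (n i + 1))).pow (e i : ℕ)
  let v : {e : (i : Fin k) → Fin (n i + 1) // ∑ i, (e i : ℕ) = d} →
      MvPolynomial (Σ i : Fin k, Fin (n i + 1)) (ZMod 2) ⧸ I :=
    fun e => Ideal.Quotient.mkₐ (ZMod 2) I (M e)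
  have hv : LinearIndependent (ZMod 2) v := by
    apply LinearIndependent.of_comp φ.toLinearMap
    have h := b.linearIndependent.comp
      (Subtype.val : {e : (i : Fin k) → Fin (n i + 1) // ∑ i, (e i : ℕ) = d} → _)
      Subtype.val_injective
    have heq : φ.toLinearMap ∘ v = b ∘ Subtype.val := by
      funext e
      exact hM e
    rw [heq]
    exact h
  have hspan : Submodule.map (Ideal.Quotient.mkₐ (ZMod 2) I).toLinearMap
      (MvPolynomial.homogeneousSubmodule (Σ i : Fin k, Fin (n i + 1)) (ZMod 2) d)
      = Submodule.span (ZMod 2) (Set.range v) := by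
    apply le_antisymm
    · rintro _ ⟨p, hp, rfl⟩
      have hp' : p.IsHomogeneous d := hp
      let q := ∑ e, b.repr (φ₀ p) e • M e
      have hq : p - q ∈ I := by
        rw [← Ideal.Quotient.eq_zero_iff_mem, ← Ideal.Quotient.mkₐ_eq_mk (ZMod 2), ← hψφ, map_sub]
        have : φ₀ q = φ₀ p := by
          simp only [q, map_sum, map_smul, hM]
          exact b.sum_repr _
        rw [this, sub_self, map_zero]
      have hq2 := bott_homogeneous k n a d _ hq
      rw [map_sub, homogeneousComponent_of_mem hp', if_pos rfl] at hq2
      have hq3 : Ideal.Quotient.mkₐ (ZMod 2) I p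
          = Ideal.Quotient.mkₐ (ZMod 2) I (homogeneousComponent d q) := by
        rw [← sub_eq_zero, ← map_sub, Ideal.Quotient.mkₐ_eq_mk, Ideal.Quotient.eq_zero_iff_mem]
        exact hq2
      rw [AlgHom.toLinearMap_apply, hq3]
      simp only [q, map_sum, map_smul]
      refine Submodule.sum_mem _ fun e _ => Submodule.smul_mem _ _ ?_
      rw [homogeneousComponent_of_mem (hMhom e)]
      split_ifs with h
      · exact Submodule.subset_span ⟨⟨e, h.symm⟩, rfl⟩
      · rw [map_zero]
        exact Submodule.zero_mem _
    · rw [Submodule.span_le]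
      rintro _ ⟨⟨e, he⟩, rfl⟩
      exact ⟨M e, he ▸ hMhom e, rfl⟩
  rw [hspan, finrank_span_eq_card hv, bott_coeff]
end
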